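/- arXiv:2307.05906 — 11 statements merged into one kernel-verified Lean document; each statement's English description precedes it below -/
import Mathlib

section
/- Let N and d be natural numbers with 2 ≤ N ≤ d + 1. Suppose u⋆, v⋆ : Fin N → EuclideanSpace ℝ (Fin d) satisfy u⋆ = v⋆ and the family (u⋆ i) forms a simplex ETF. Then for every u, v : Fin N → EuclideanSpace ℝ (Fin d) with ‖u i‖ = 1 and ‖v i‖ = 1 for all i, we have L(u⋆, v⋆) ≤ L(u, v); i.e., the symmetric simplex-ETF configuration globally minimizes the full-batch contrastive loss over unit-norm configurations. -/
open scoped RealInnerProductSpace BigOperators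
open Finset

noncomputable def fullLoss {N d : ℕ} (u v : Fin N → EuclideanSpace ℝ (Fin d)) : ℝ :=
  -(1/(N:ℝ)) * ∑ i, Real.log (Real.exp ⟪u i, v i⟫ / ∑ j, Real.exp ⟪u i, v j⟫)
  - (1/(N:ℝ)) * ∑ i, Real.log (Real.exp ⟪v i, u i⟫ / ∑ j, Real.exp ⟪v i, u j⟫)

noncomputable def batchLoss {N d : ℕ} (S : Finset (Fin N))
    (u v : Fin N → EuclideanSpace ℝ (Fin d)) : ℝ :=
  -(1/(S.card : ℝ)) * ∑ i ∈ S, Real.log (Real.exp ⟪u i, v i⟫ / ∑ j ∈ S, Real.exp ⟪u i, v j⟫)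
  - (1/(S.card : ℝ)) * ∑ i ∈ S, Real.log (Real.exp ⟪v i, u i⟫ / ∑ j ∈ S, Real.exp ⟪v i, u j⟫)

def IsSimplexETF {N d : ℕ} (u : Fin N → EuclideanSpace ℝ (Fin d)) : Prop :=
  (∀ i, ‖u i‖ = 1) ∧ ∀ i j, i ≠ j → ⟪u i, u j⟫ = -(1/((N:ℝ) - 1))

def IsSimplexCrossPolytope {N d : ℕ} (u : Fin N → EuclideanSpace ℝ (Fin d)) : Prop :=
  (∀ i, ‖u i‖ = 1) ∧ ∀ i, ∃ j, ⟪u i, u j⟫ = -1 ∧ (∀ j', ⟪u i, u j'⟫ = -1 → j' = j) ∧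
    ∀ k, k ≠ i → k ≠ j → ⟪u i, u k⟫ = 0

def SymmAntipodal {N d : ℕ} (u v : Fin N → EuclideanSpace ℝ (Fin d)) : Prop :=
  u = v ∧ ∀ i, ∃ j, u j = -(u i)

noncomputable def avgBatchLoss {N d : ℕ} (B : ℕ)
    (u v : Fin N → EuclideanSpace ℝ (Fin d)) : ℝ :=
  (1/(N.choose B : ℝ)) * ∑ S ∈ Finset.powersetCard B (Finset.univ : Finset (Fin N)), batchLoss S u v

/-!
Subtracting the matched similarity, each term of the loss is `log (∑ j, exp (z j))` for the
differences `z j = ⟪u i, v j⟫ - ⟪u i, v i⟫`, which vanish at `j = i`. By convexity log-sum-exp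
lies above its tangent at the point that is `0` at `i` and `-t` elsewhere, so the loss is bounded
below by an affine function of `∑ i, ∑ j, ⟪u i, v i - v j⟫`. Cauchy–Schwarz applied to
`∑ i, (u i - v i)` bounds that double sum by the norms of the vectors. A simplex ETF sits exactly
at the tangent point with `t = N / (N - 1)`, where the two bounds combine to the minimal value.
-/

open Real

section LogSumExp

variable {ι : Type*}

theorem log_sum_exp_tangent_le {s : Finset ι} (hs : s.Nonempty) (x y : ι → ℝ) :
    log (∑ j ∈ s, exp (y j)) + (∑ j ∈ s, exp (y j) * (x j - y j)) / ∑ j ∈ s, exp (y j) ≤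
      log (∑ j ∈ s, exp (x j)) := by
  have exp_sum_pos (z : ι → ℝ) : 0 < ∑ j ∈ s, exp (z j) :=
    sum_pos (fun j _ => exp_pos (z j)) hs
  have jensen : exp ((∑ j ∈ s, exp (y j) * (x j - y j)) / ∑ j ∈ s, exp (y j)) ≤
      (∑ j ∈ s, exp (x j)) / ∑ j ∈ s, exp (y j) := by
    have := convexOn_exp.map_centerMass_le (t := s) (w := fun j => exp (y j))
      (p := fun j => x j - y j) (fun j _ => (exp_pos (y j)).le) (exp_sum_pos y)
      (fun j _ => Set.mem_univ _)
    simpa only [centerMass, smul_eq_mul, Function.comp_apply, ← exp_add,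
      add_sub_cancel, inv_mul_eq_div] using this
  have log_jensen := (le_log_iff_exp_le (div_pos (exp_sum_pos x) (exp_sum_pos y))).mpr jensen
  rw [log_div (exp_sum_pos x).ne' (exp_sum_pos y).ne'] at log_jensen
  linarith

variable [Fintype ι]

theorem sum_eq_add_card_sub_one_mul {R : Type*} [Ring R] {f : ι → R} {i : ι} {b : R}
    (hf : ∀ j, j ≠ i → f j = b) : ∑ j, f j = f i + ((Fintype.card ι : R) - 1) * b := by
  classical
  have : Nonempty ι := ⟨i⟩
  rw [← add_sum_erase _ f (mem_univ i),
    sum_congr rfl fun j hj => hf j (ne_of_mem_erase hj), sum_const,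
    card_erase_of_mem (mem_univ i), card_univ, nsmul_eq_mul,
    Nat.cast_pred Fintype.card_pos]

theorem neg_log_exp_div_sum_exp (x : ι → ℝ) (i : ι) :
    -log (exp (x i) / ∑ j, exp (x j)) = log (∑ j, exp (x j - x i)) := by
  simp only [← log_inv, inv_div, exp_sub, sum_div]

theorem log_sum_exp_ge_of_apply_eq_zero {z : ι → ℝ} {i : ι} (hz : z i = 0) (t : ℝ) :
    log (1 + ((Fintype.card ι : ℝ) - 1) * exp (-t)) +
        exp (-t) / (1 + ((Fintype.card ι : ℝ) - 1) * exp (-t)) *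
          (∑ j, z j + ((Fintype.card ι : ℝ) - 1) * t) ≤
      log (∑ j, exp (z j)) := by
  classical
  let y : ι → ℝ := fun j => if j = i then 0 else -t
  have y_self : y i = 0 := if_pos rfl
  have y_of_ne (j : ι) (hj : j ≠ i) : y j = -t := if_neg hj
  have sum_y : ∑ j, y j = -(((Fintype.card ι : ℝ) - 1) * t) := by
    rw [sum_eq_add_card_sub_one_mul y_of_ne, y_self]
    ring
  have sum_exp_y : ∑ j, exp (y j) = 1 + ((Fintype.card ι : ℝ) - 1) * exp (-t) := by
    rw [sum_eq_add_card_sub_one_mul fun j hj => congrArg exp (y_of_ne j hj), y_self, exp_zero]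
  have slope : ∑ j, exp (y j) * (z j - y j) =
      exp (-t) * (∑ j, z j + ((Fintype.card ι : ℝ) - 1) * t) := by
    have slope_apply (j : ι) : exp (y j) * (z j - y j) = exp (-t) * (z j - y j) := by
      by_cases hj : j = i
      · rw [hj, hz, y_self, sub_zero, mul_zero, mul_zero]
      · rw [y_of_ne j hj]
    rw [sum_congr rfl fun j _ => slope_apply j, ← mul_sum, sum_sub_distrib,
      sum_y, sub_neg_eq_add]
  have tangent := log_sum_exp_tangent_le ⟨i, mem_univ i⟩ z y
  rwa [sum_exp_y, slope, mul_div_right_comm] at tangent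

end LogSumExp

theorem norm_sum_sq_le_card_mul_sum_norm_sq {ι E : Type*} [SeminormedAddCommGroup E]
    (s : Finset ι) (w : ι → E) : ‖∑ i ∈ s, w i‖ ^ 2 ≤ #s * ∑ i ∈ s, ‖w i‖ ^ 2 :=
  calc ‖∑ i ∈ s, w i‖ ^ 2 ≤ (∑ i ∈ s, ‖w i‖) ^ 2 := by gcongr; exact norm_sum_le _ _
    _ ≤ #s * ∑ i ∈ s, ‖w i‖ ^ 2 := sq_sum_le_card_mul_sum_sq

section InfoNCE

variable {ι E : Type*} [Fintype ι] [NormedAddCommGroup E] [InnerProductSpace ℝ E]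

theorem sum_sum_inner_sub_le (u v : ι → E) :
    ∑ i, ∑ j, ⟪u i, v i - v j⟫ ≤
      Fintype.card ι / 2 * (∑ i, ‖u i‖ ^ 2 + ∑ i, ‖v i‖ ^ 2) := by
  have expand : ∑ i, ∑ j, ⟪u i, v i - v j⟫ =
      Fintype.card ι * ∑ i, ⟪u i, v i⟫ - ⟪∑ i, u i, ∑ j, v j⟫ := by
    simp only [inner_sub_right, sum_sub_distrib, sum_const, card_univ,
      nsmul_eq_mul, sum_inner, inner_sum, ← mul_sum]
    rw [sum_comm]
  have cauchy_schwarz := norm_sum_sq_le_card_mul_sum_norm_sq univ fun i => u i - v i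
  simp only [card_univ, norm_sub_sq_real, sum_add_distrib, sum_sub_distrib,
    ← mul_sum] at cauchy_schwarz
  rw [expand]
  linarith [sq_nonneg ‖∑ i, u i‖, sq_nonneg ‖∑ i, v i‖]

/-- The one-sided contrastive (InfoNCE) loss: the mean cross-entropy of recognising, among all the
`v j`, the partner `v i` of `u i` from the softmax of the similarities `⟪u i, v j⟫`. The contrastive
loss is its symmetrization. -/
noncomputable def infoNCE (u v : ι → E) : ℝ :=
  -(1 / (Fintype.card ι : ℝ)) * ∑ i, log (exp ⟪u i, v i⟫ / ∑ j, exp ⟪u i, v j⟫)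

theorem infoNCE_eq_mean_log_sum_exp (u v : ι → E) :
    infoNCE u v = (∑ i, log (∑ j, exp (-⟪u i, v i - v j⟫))) / Fintype.card ι := by
  have term_eq (i : ι) : log (∑ j, exp (-⟪u i, v i - v j⟫)) =
      -log (exp ⟪u i, v i⟫ / ∑ j, exp ⟪u i, v j⟫) := by
    simp only [neg_log_exp_div_sum_exp (fun j => ⟪u i, v j⟫) i, inner_sub_right, neg_sub]
  simp only [infoNCE, term_eq, sum_neg_distrib]
  ring

variable [Nonempty ι]

theorem infoNCE_eq_of_forall_inner_sub_eq {u v : ι → E} {t : ℝ}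
    (hgap : ∀ i j, i ≠ j → ⟪u i, v i - v j⟫ = t) :
    infoNCE u v = log (1 + ((Fintype.card ι : ℝ) - 1) * exp (-t)) := by
  have sum_exp (i : ι) : ∑ j, exp (-⟪u i, v i - v j⟫) =
      1 + ((Fintype.card ι : ℝ) - 1) * exp (-t) := by
    rw [sum_eq_add_card_sub_one_mul (i := i) fun j hj => by rw [hgap i j hj.symm],
      sub_self, inner_zero_right, neg_zero, exp_zero]
  simp [infoNCE_eq_mean_log_sum_exp, sum_exp]

theorem log_one_add_card_sub_one_mul_exp_neg_le_infoNCE {u v : ι → E} {t : ℝ}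
    (hnorm : ∑ i, ‖u i‖ ^ 2 + ∑ i, ‖v i‖ ^ 2 ≤ 2 * (((Fintype.card ι : ℝ) - 1) * t)) :
    log (1 + ((Fintype.card ι : ℝ) - 1) * exp (-t)) ≤ infoNCE u v := by
  have card_pos : 0 < (Fintype.card ι : ℝ) := Nat.cast_pos.mpr Fintype.card_pos
  have card_ge_one : 0 ≤ (Fintype.card ι : ℝ) - 1 :=
    sub_nonneg.mpr (Nat.one_le_cast.mpr Fintype.card_pos)
  set Z := 1 + ((Fintype.card ι : ℝ) - 1) * exp (-t)
  have Z_pos : 0 < Z := by positivity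
  have gap_le : ∑ i, ∑ j, ⟪u i, v i - v j⟫ ≤
      Fintype.card ι * (((Fintype.card ι : ℝ) - 1) * t) :=
    calc _ ≤ Fintype.card ι / 2 * (∑ i, ‖u i‖ ^ 2 + ∑ i, ‖v i‖ ^ 2) := sum_sum_inner_sub_le u v
      _ ≤ Fintype.card ι / 2 * (2 * (((Fintype.card ι : ℝ) - 1) * t)) := by gcongr
      _ = _ := by ring
  have tangent (i : ι) : log Z + exp (-t) / Z *
      (∑ j, -⟪u i, v i - v j⟫ + ((Fintype.card ι : ℝ) - 1) * t) ≤
        log (∑ j, exp (-⟪u i, v i - v j⟫)) :=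
    log_sum_exp_ge_of_apply_eq_zero (i := i) (by rw [sub_self, inner_zero_right, neg_zero]) t
  rw [infoNCE_eq_mean_log_sum_exp, le_div_iff₀ card_pos]
  calc log Z * Fintype.card ι
      ≤ Fintype.card ι * log Z + exp (-t) / Z * (Fintype.card ι *
          (((Fintype.card ι : ℝ) - 1) * t) - ∑ i, ∑ j, ⟪u i, v i - v j⟫) := by
        rw [mul_comm]
        exact le_add_of_nonneg_right
          (mul_nonneg (div_pos (exp_pos _) Z_pos).le (sub_nonneg.mpr gap_le))
    _ = ∑ i, (log Z + exp (-t) / Z *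
          (∑ j, -⟪u i, v i - v j⟫ + ((Fintype.card ι : ℝ) - 1) * t)) := by
        simp only [sum_add_distrib, ← mul_sum, sum_neg_distrib,
          sum_const, card_univ, nsmul_eq_mul]
        ring
    _ ≤ ∑ i, log (∑ j, exp (-⟪u i, v i - v j⟫)) := sum_le_sum fun i _ => tangent i

end InfoNCE

section SimplexETF

variable {ι E : Type*} [Fintype ι] [Nontrivial ι] [NormedAddCommGroup E] [InnerProductSpace ℝ E]

theorem infoNCE_simplex_le {w : ι → E} (hw_norm : ∀ i, ‖w i‖ = 1)
    (hw_inner : ∀ i j, i ≠ j → ⟪w i, w j⟫ = -(1 / ((Fintype.card ι : ℝ) - 1))) {u v : ι → E}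
    (hnorm : ∑ i, ‖u i‖ ^ 2 + ∑ i, ‖v i‖ ^ 2 ≤ 2 * Fintype.card ι) :
    infoNCE w w ≤ infoNCE u v := by
  have card_sub_one_ne_zero : (Fintype.card ι : ℝ) - 1 ≠ 0 :=
    (sub_pos.mpr (Nat.one_lt_cast.mpr Fintype.one_lt_card)).ne'
  have gap (i j : ι) (hij : i ≠ j) :
      ⟪w i, w i - w j⟫ = Fintype.card ι / ((Fintype.card ι : ℝ) - 1) := by
    rw [inner_sub_right, real_inner_self_eq_norm_sq, hw_norm, hw_inner i j hij]
    field_simp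
    ring
  rw [infoNCE_eq_of_forall_inner_sub_eq gap]
  apply log_one_add_card_sub_one_mul_exp_neg_le_infoNCE
  rwa [mul_div_cancel₀ _ card_sub_one_ne_zero]

theorem etf_minimizes_fullLoss_general {w : ι → E} (hw_norm : ∀ i, ‖w i‖ = 1)
    (hw_inner : ∀ i j, i ≠ j → ⟪w i, w j⟫ = -(1 / ((Fintype.card ι : ℝ) - 1))) {u v : ι → E}
    (hnorm : ∑ i, ‖u i‖ ^ 2 + ∑ i, ‖v i‖ ^ 2 ≤ 2 * Fintype.card ι) :
    infoNCE w w + infoNCE w w ≤ infoNCE u v + infoNCE v u :=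
  add_le_add (infoNCE_simplex_le hw_norm hw_inner hnorm)
    (infoNCE_simplex_le hw_norm hw_inner (by rwa [add_comm]))

end SimplexETF

theorem fullLoss_eq_infoNCE_add_infoNCE {N d : ℕ} (u v : Fin N → EuclideanSpace ℝ (Fin d)) :
    fullLoss u v = infoNCE u v + infoNCE v u := by
  rw [fullLoss, infoNCE, infoNCE, Fintype.card_fin]
  ring

/-- The symmetric simplex-ETF configuration globally minimizes the full-batch
contrastive loss over unit-norm configurations, when `2 ≤ N ≤ d + 1`. -/
theorem etf_minimizes_fullLoss (N d : ℕ) (hN2 : 2 ≤ N) (hNd : N ≤ d + 1)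
    (ustar vstar : Fin N → EuclideanSpace ℝ (Fin d))
    (hsymm : ustar = vstar) (hetf : IsSimplexETF ustar) :
    ∀ u v : Fin N → EuclideanSpace ℝ (Fin d),
      (∀ i, ‖u i‖ = 1) → (∀ i, ‖v i‖ = 1) →
      fullLoss ustar vstar ≤ fullLoss u v := by
  intro u v hu hv
  have : Nontrivial (Fin N) := Fin.nontrivial_iff_two_le.mpr hN2
  subst hsymm
  rw [fullLoss_eq_infoNCE_add_infoNCE, fullLoss_eq_infoNCE_add_infoNCE]
  exact etf_minimizes_fullLoss_general hetf.1 (by simpa only [Fintype.card_fin] using hetf.2)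
    (by simp [hu, hv, two_mul])
end

section
/- Let d ≥ 2 and N = 2d. Suppose (u⋆, v⋆) is symmetric and antipodal with ‖u⋆ i‖ = 1 for all i, and the family (u⋆ i) forms a simplex cross-polytope. Then for every symmetric and antipodal pair (u, v) with ‖u i‖ = ‖v i‖ = 1 for all i, we have L(u⋆, v⋆) ≤ L(u, v); i.e., among symmetric antipodal unit-norm configurations the simplex cross-polytope minimizes the full-batch contrastive loss. -/
open scoped RealInnerProductSpace BigOperators
open Finset

/-!
Since log-sum-exp is convex, it lies above its tangent at the cross-polytope row `(1, -1, 0, …, 0)`.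
A Gram row of an antipodal unit configuration agrees with that row in the two nonzero coordinates,
while the gradient is the same constant `1 / Z` in all the others. So the tangent inequality reads
`log Z + (∑ k, ⟪u i, u k⟫) / Z ≤ log (∑ k, exp ⟪u i, u k⟫)`. Summed over `i`, the linear terms give
`‖∑ i, u i‖ ^ 2 / Z ≥ 0`, and the cross-polytope attains the remaining bound in every row.
-/

theorem log_sum_exp_add_gradient_le {ι : Type*} {s : Finset ι} (hs : s.Nonempty) (a t : ι → ℝ) :
    Real.log (∑ k ∈ s, Real.exp (a k)) +
        (∑ k ∈ s, Real.exp (a k) * (t k - a k)) / ∑ k ∈ s, Real.exp (a k) ≤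
      Real.log (∑ k ∈ s, Real.exp (t k)) := by
  set Z := ∑ k ∈ s, Real.exp (a k)
  set m := (∑ k ∈ s, Real.exp (a k) * (t k - a k)) / Z
  have hZ : 0 < Z := sum_pos (fun _ _ => Real.exp_pos _) hs
  have jensen : Real.exp m ≤ (∑ k ∈ s, Real.exp (t k)) / Z := by
    have h := convexOn_exp.map_centerMass_le (t := s) (w := fun k => Real.exp (a k))
      (p := fun k => t k - a k) (fun _ _ => (Real.exp_pos _).le) hZ (fun _ _ => Set.mem_univ _)
    simpa only [centerMass, smul_eq_mul, Function.comp_apply, ← Real.exp_add, add_sub_cancel,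
      inv_mul_eq_div] using h
  calc Real.log Z + m = Real.log (Real.exp m * Z) := by
        rw [Real.log_mul (Real.exp_pos m).ne' hZ.ne', Real.log_exp, add_comm]
    _ ≤ Real.log (∑ k ∈ s, Real.exp (t k)) :=
        Real.log_le_log (by positivity) ((le_div_iff₀ hZ).mp jensen)

/-- The row-wise partition function `∑ k, exp ⟪u i, u k⟫` of a simplex cross-polytope with `n`
vertices: the inner products in a row are `1`, `-1` and `n - 2` zeros. The subtraction is real, so
that the value is positive for every `n`. -/
noncomputable def crossPolytopePartition (n : ℕ) : ℝ :=
  Real.exp 1 + Real.exp (-1) + ((n : ℝ) - 2)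

theorem crossPolytopePartition_pos (n : ℕ) : 0 < crossPolytopePartition n := by
  have two_le_exp_one := Real.add_one_le_exp 1
  have exp_neg_one_pos := Real.exp_pos (-1)
  unfold crossPolytopePartition
  linarith

section AntipodalProfile

variable {ι : Type*} [DecidableEq ι] {i j : ι}

/-- The `i`-th row of the Gram matrix of a simplex cross-polytope in which the vertex `j` is
antipodal to the vertex `i`. -/
def antipodalProfile (i j : ι) : ι → ℝ := Pi.single i 1 - Pi.single j 1

theorem antipodalProfile_left (hij : i ≠ j) : antipodalProfile i j i = 1 := by
  simp [antipodalProfile, hij]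

theorem antipodalProfile_right (hij : i ≠ j) : antipodalProfile i j j = -1 := by
  simp [antipodalProfile, hij.symm]

theorem antipodalProfile_of_ne {k : ι} (hki : k ≠ i) (hkj : k ≠ j) :
    antipodalProfile i j k = 0 := by
  simp [antipodalProfile, hki, hkj]

variable [Fintype ι]

theorem sum_antipodalProfile (i j : ι) : ∑ k, antipodalProfile i j k = 0 := by
  simp [antipodalProfile]

theorem sum_exp_antipodalProfile (hij : i ≠ j) :
    ∑ k, Real.exp (antipodalProfile i j k) = crossPolytopePartition (Fintype.card ι) := by
  have excess : ∑ k, (Real.exp (antipodalProfile i j k) - 1) =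
      (Real.exp 1 - 1) + (Real.exp (-1) - 1) := by
    rw [Fintype.sum_eq_add i j hij, antipodalProfile_left hij, antipodalProfile_right hij]
    rintro k ⟨hki, hkj⟩
    rw [antipodalProfile_of_ne hki hkj, Real.exp_zero, sub_self]
  rw [sum_sub_distrib, sum_const, card_univ, nsmul_one] at excess
  unfold crossPolytopePartition
  linarith

end AntipodalProfile

theorem log_partition_add_sum_div_le {ι : Type*} [Fintype ι] {i j : ι}
    {t : ι → ℝ} (hi : t i = 1) (hj : t j = -1) :
    Real.log (crossPolytopePartition (Fintype.card ι)) +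
        (∑ k, t k) / crossPolytopePartition (Fintype.card ι) ≤
      Real.log (∑ k, Real.exp (t k)) := by
  classical
  have hij : i ≠ j := by
    rintro rfl
    linarith
  have gradient_term (k : ι) :
      Real.exp (antipodalProfile i j k) * (t k - antipodalProfile i j k) =
        t k - antipodalProfile i j k := by
    rcases eq_or_ne k i with rfl | hki
    · rw [antipodalProfile_left hij, hi, sub_self, mul_zero]
    rcases eq_or_ne k j with rfl | hkj
    · rw [antipodalProfile_right hij, hj, sub_self, mul_zero]
    rw [antipodalProfile_of_ne hki hkj, Real.exp_zero, one_mul]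
  have tangent := log_sum_exp_add_gradient_le ⟨i, mem_univ i⟩ (antipodalProfile i j) t
  simpa only [gradient_term, sum_sub_distrib, sum_antipodalProfile, sub_zero,
    sum_exp_antipodalProfile hij] using tangent

section InnerProductSpace

variable {ι E : Type*} [Fintype ι] [NormedAddCommGroup E] [InnerProductSpace ℝ E]

theorem sum_sum_inner_nonneg (u : ι → E) : 0 ≤ ∑ i, ∑ j, ⟪u i, u j⟫ := by
  rw [sum_comm]
  simpa only [sum_inner, inner_sum] using real_inner_self_nonneg (x := ∑ i, u i)

theorem card_mul_log_partition_le_sum_log_sum_exp_inner {u : ι → E} (hu : ∀ i, ‖u i‖ = 1)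
    (hanti : ∀ i, ∃ j, u j = -u i) :
    Fintype.card ι * Real.log (crossPolytopePartition (Fintype.card ι)) ≤
      ∑ i, Real.log (∑ j, Real.exp ⟪u i, u j⟫) := by
  set Z := crossPolytopePartition (Fintype.card ι)
  have row (i : ι) :
      Real.log Z + (∑ k, ⟪u i, u k⟫) / Z ≤ Real.log (∑ k, Real.exp ⟪u i, u k⟫) := by
    obtain ⟨j, hj⟩ := hanti i
    have inner_self : ⟪u i, u i⟫ = 1 := inner_self_eq_one_of_norm_eq_one (hu i)
    have inner_antipode : ⟪u i, u j⟫ = -1 := by rw [hj, inner_neg_right, inner_self]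
    exact log_partition_add_sum_div_le inner_self inner_antipode
  calc Fintype.card ι * Real.log Z
      ≤ Fintype.card ι * Real.log Z + (∑ i, ∑ k, ⟪u i, u k⟫) / Z :=
        le_add_of_nonneg_right
          (div_nonneg (sum_sum_inner_nonneg u) (crossPolytopePartition_pos _).le)
    _ = ∑ i, (Real.log Z + (∑ k, ⟪u i, u k⟫) / Z) := by
        rw [sum_add_distrib, ← sum_div, sum_const, card_univ, nsmul_eq_mul]
    _ ≤ ∑ i, Real.log (∑ k, Real.exp ⟪u i, u k⟫) := sum_le_sum fun i _ => row i

end InnerProductSpace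

section FullLoss

variable {N d : ℕ} {u : Fin N → EuclideanSpace ℝ (Fin d)}

theorem fullLoss_self (u : Fin N → EuclideanSpace ℝ (Fin d)) :
    fullLoss u u = 2 / N * ∑ i, (Real.log (∑ j, Real.exp ⟪u i, u j⟫) - ‖u i‖ ^ 2) := by
  have log_softmax (i : Fin N) : Real.log (Real.exp ⟪u i, u i⟫ / ∑ j, Real.exp ⟪u i, u j⟫) =
      -(Real.log (∑ j, Real.exp ⟪u i, u j⟫) - ‖u i‖ ^ 2) := by
    have partition_pos : 0 < ∑ j, Real.exp ⟪u i, u j⟫ :=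
      sum_pos (fun _ _ => Real.exp_pos _) ⟨i, mem_univ i⟩
    rw [Real.log_div (Real.exp_pos _).ne' partition_pos.ne', Real.log_exp,
      real_inner_self_eq_norm_sq, neg_sub]
  simp only [fullLoss, log_softmax, sum_neg_distrib]
  ring

theorem fullLoss_self_of_norm_eq_one [NeZero N] (hu : ∀ i, ‖u i‖ = 1) :
    fullLoss u u = 2 / N * ∑ i, Real.log (∑ j, Real.exp ⟪u i, u j⟫) - 2 := by
  have hN : (N : ℝ) ≠ 0 := NeZero.ne _
  simp only [fullLoss_self, hu, one_pow, sum_sub_distrib, sum_const, card_univ, Fintype.card_fin,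
    nsmul_one]
  field_simp

theorem IsSimplexCrossPolytope.exists_inner_eq_antipodalProfile (hcp : IsSimplexCrossPolytope u)
    (i : Fin N) : ∃ j, i ≠ j ∧ ∀ k, ⟪u i, u k⟫ = antipodalProfile i j k := by
  obtain ⟨j, inner_antipode, -, inner_other⟩ := hcp.2 i
  have hij : i ≠ j := by
    rintro rfl
    linarith [real_inner_self_nonneg (x := u i)]
  refine ⟨j, hij, fun k => ?_⟩
  rcases eq_or_ne k i with rfl | hki
  · rw [inner_self_eq_one_of_norm_eq_one (hcp.1 k), antipodalProfile_left hij]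
  rcases eq_or_ne k j with rfl | hkj
  · rw [inner_antipode, antipodalProfile_right hij]
  rw [inner_other k hki hkj, antipodalProfile_of_ne hki hkj]

theorem IsSimplexCrossPolytope.sum_exp_inner (hcp : IsSimplexCrossPolytope u) (i : Fin N) :
    ∑ j, Real.exp ⟪u i, u j⟫ = crossPolytopePartition N := by
  obtain ⟨j, hij, row⟩ := hcp.exists_inner_eq_antipodalProfile i
  simp only [row, sum_exp_antipodalProfile hij, Fintype.card_fin]

variable [NeZero N]

theorem IsSimplexCrossPolytope.fullLoss_self (hcp : IsSimplexCrossPolytope u) :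
    fullLoss u u = 2 * Real.log (crossPolytopePartition N) - 2 := by
  have hN : (N : ℝ) ≠ 0 := NeZero.ne _
  simp only [fullLoss_self_of_norm_eq_one hcp.1, hcp.sum_exp_inner, sum_const, card_univ,
    Fintype.card_fin, nsmul_eq_mul]
  field_simp

theorem two_mul_log_partition_sub_two_le_fullLoss (hu : ∀ i, ‖u i‖ = 1)
    (hanti : ∀ i, ∃ j, u j = -u i) :
    2 * Real.log (crossPolytopePartition N) - 2 ≤ fullLoss u u := by
  have hN : (N : ℝ) ≠ 0 := NeZero.ne _
  have bound := card_mul_log_partition_le_sum_log_sum_exp_inner hu hanti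
  rw [Fintype.card_fin] at bound
  rw [fullLoss_self_of_norm_eq_one hu]
  calc 2 * Real.log (crossPolytopePartition N) - 2
      = 2 / N * (N * Real.log (crossPolytopePartition N)) - 2 := by field_simp
    _ ≤ 2 / N * ∑ i, Real.log (∑ j, Real.exp ⟪u i, u j⟫) - 2 := by gcongr

end FullLoss

theorem crossPolytope_minimizes_fullLoss_general {N d d' : ℕ} [NeZero N]
    {ustar vstar : Fin N → EuclideanSpace ℝ (Fin d)} (hsymm : ustar = vstar)
    (hcp : IsSimplexCrossPolytope ustar) {u v : Fin N → EuclideanSpace ℝ (Fin d')}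
    (hsa : SymmAntipodal u v) (hu : ∀ i, ‖u i‖ = 1) :
    fullLoss ustar vstar ≤ fullLoss u v := by
  obtain ⟨rfl, hanti⟩ := hsa
  rw [← hsymm, hcp.fullLoss_self]
  exact two_mul_log_partition_sub_two_le_fullLoss hu hanti

/-- Among symmetric antipodal unit-norm configurations with `N = 2d`, the simplex
cross-polytope minimizes the full-batch contrastive loss. -/
theorem crossPolytope_minimizes_fullLoss (d : ℕ) (hd : 2 ≤ d) (N : ℕ) (hN : N = 2 * d)
    (ustar vstar : Fin N → EuclideanSpace ℝ (Fin d))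
    (hsa : SymmAntipodal ustar vstar) (hnorm : ∀ i, ‖ustar i‖ = 1)
    (hcp : IsSimplexCrossPolytope ustar) :
    ∀ u v : Fin N → EuclideanSpace ℝ (Fin d),
      SymmAntipodal u v → (∀ i, ‖u i‖ = 1) → (∀ i, ‖v i‖ = 1) →
      fullLoss ustar vstar ≤ fullLoss u v := by
  have : NeZero N := ⟨by lia⟩
  exact fun _ _ hsa' hu _ => crossPolytope_minimizes_fullLoss_general hsa.1 hcp hsa' hu
end

section
/- Let 2 ≤ B < N and d ≥ N. There exists no real constant c such that for all u, v : Fin N → EuclideanSpace ℝ (Fin d) with ‖u i‖ = ‖v i‖ = 1 for all i, the average mini-batch loss (1/C(N,B)) Σ_{S ⊆ Fin N, |S| = B} L_S(u,v) equals c · L(u,v). In particular, the average mini-batch contrastive loss is neither identical to the full-batch contrastive loss nor a constant multiple of it. -/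
open scoped RealInnerProductSpace BigOperators
open Finset

/-!
On a configuration with `⟪u i, v i⟫ = a` and `⟪u i, v j⟫ = b` for `i ≠ j`, every batch of size `n`
has the same loss `2 log (1 + (n - 1) exp (b - a))`. All vectors equal to one unit vector give
`2 log n`, and `u = v` orthonormal gives `2 log (1 + (n - 1) t)` with `t = exp (-1)`. A constant
relating the losses for `n = B` and `n = N` would make the ratio `log (1 + (x - 1) t) / log x`
agree at `x = B` and `x = N`, but this ratio is strictly increasing in `x > 1`.
-/

-- With `p = log x / log y` we have `y ^ p = x`, so this is strict concavity of `z ↦ z ^ p`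
-- between `1` and `y`.
theorem strictMonoOn_log_one_add_sub_one_mul_div_log {t : ℝ} (ht₀ : 0 < t) (ht₁ : t < 1) :
    StrictMonoOn (fun x : ℝ ↦ Real.log (1 + (x - 1) * t) / Real.log x) (Set.Ioi 1) := by
  intro x (hx : 1 < x) y (hy : 1 < y) hxy
  have hlogx : 0 < Real.log x := Real.log_pos hx
  have hlogy : 0 < Real.log y := Real.log_pos hy
  set p := Real.log x / Real.log y with hp
  have hp₀ : 0 < p := div_pos hlogx hlogy
  have hp₁ : p < 1 := (div_lt_one hlogy).2 (Real.log_lt_log (by linarith) hxy)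
  have rpow_eq : y ^ p = x := by
    rw [Real.rpow_def_of_pos (by linarith), mul_div_cancel₀ _ hlogy.ne',
      Real.exp_log (by linarith)]
  have pos_of_one_lt {z : ℝ} (hz : 1 < z) : 0 < 1 + (z - 1) * t := by
    have := mul_pos (sub_pos.2 hz) ht₀
    linarith
  have concavity : 1 + (x - 1) * t < (1 + (y - 1) * t) ^ p :=
    calc 1 + (x - 1) * t = (1 - t) * 1 ^ p + t * y ^ p := by rw [rpow_eq, Real.one_rpow]; ring
      _ < ((1 - t) * 1 + t * y) ^ p :=
        (Real.strictConcaveOn_rpow hp₀ hp₁).2 (Set.mem_Ici.2 zero_le_one)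
          (Set.mem_Ici.2 (by linarith)) hy.ne (sub_pos.2 ht₁) ht₀ (sub_add_cancel 1 t)
      _ = (1 + (y - 1) * t) ^ p := by ring_nf
  have log_lt : Real.log (1 + (x - 1) * t) < p * Real.log (1 + (y - 1) * t) := by
    rw [← Real.log_rpow (pos_of_one_lt hy)]
    exact Real.log_lt_log (pos_of_one_lt hx) concavity
  calc Real.log (1 + (x - 1) * t) / Real.log x
      < p * Real.log (1 + (y - 1) * t) / Real.log x := div_lt_div_of_pos_right log_lt hlogx
    _ = Real.log (1 + (y - 1) * t) / Real.log y := by rw [hp]; field_simp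

theorem log_exp_div_sum_exp_of_forall_ne {ι : Type*} {S : Finset ι} {i : ι} (hi : i ∈ S)
    {w : ι → ℝ} {b : ℝ} (hw : ∀ j ∈ S, j ≠ i → w j = b) :
    Real.log (Real.exp (w i) / ∑ j ∈ S, Real.exp (w j)) =
      -Real.log (1 + (#S - 1) * Real.exp (b - w i)) := by
  classical
  have sum_eq : ∑ j ∈ S, Real.exp (w j) = Real.exp (w i) + (#S - 1) * Real.exp b := by
    have off_diagonal : ∀ j ∈ S.erase i, Real.exp (w j) = Real.exp b := fun j hj ↦ by
      rw [hw j (mem_of_mem_erase hj) (ne_of_mem_erase hj)]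
    rw [← add_sum_erase S _ hi, sum_congr rfl off_diagonal, sum_const, nsmul_eq_mul,
      cast_card_erase_of_mem hi]
  rw [sum_eq, ← Real.log_inv, Real.exp_sub]
  congr 1
  field_simp

section

variable {N d : ℕ} {u v : Fin N → EuclideanSpace ℝ (Fin d)}

theorem fullLoss_eq_batchLoss_univ (u v : Fin N → EuclideanSpace ℝ (Fin d)) :
    fullLoss u v = batchLoss univ u v := by
  rw [fullLoss, batchLoss, card_fin]

theorem avgBatchLoss_eq_of_forall_batchLoss_eq {B : ℕ} (hBN : B ≤ N) {x : ℝ}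
    (h : ∀ S : Finset (Fin N), #S = B → batchLoss S u v = x) : avgBatchLoss B u v = x := by
  have choose_ne_zero : (N.choose B : ℝ) ≠ 0 := Nat.cast_ne_zero.2 (Nat.choose_pos hBN).ne'
  rw [avgBatchLoss, sum_congr rfl fun S hS ↦ h S (mem_powersetCard.1 hS).2, sum_const,
    card_powersetCard, card_fin, nsmul_eq_mul, one_div, inv_mul_cancel_left₀ choose_ne_zero]

variable {a b : ℝ}

theorem batchLoss_of_inner_eq (hdiag : ∀ i, ⟪u i, v i⟫ = a)
    (hoff : Pairwise fun i j ↦ ⟪u i, v j⟫ = b) {S : Finset (Fin N)} (hS : S.Nonempty) :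
    batchLoss S u v = 2 * Real.log (1 + (#S - 1) * Real.exp (b - a)) := by
  have log_uv : ∀ i ∈ S, Real.log (Real.exp ⟪u i, v i⟫ / ∑ j ∈ S, Real.exp ⟪u i, v j⟫) =
      -Real.log (1 + (#S - 1) * Real.exp (b - a)) := fun i hi ↦ by
    rw [log_exp_div_sum_exp_of_forall_ne hi fun j _ hji ↦ hoff hji.symm, hdiag]
  have log_vu : ∀ i ∈ S, Real.log (Real.exp ⟪v i, u i⟫ / ∑ j ∈ S, Real.exp ⟪v i, u j⟫) =
      -Real.log (1 + (#S - 1) * Real.exp (b - a)) := fun i hi ↦ by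
    rw [log_exp_div_sum_exp_of_forall_ne hi fun j _ hji ↦ (real_inner_comm _ _).trans (hoff hji),
      real_inner_comm, hdiag]
  have card_ne_zero : (#S : ℝ) ≠ 0 := Nat.cast_ne_zero.2 hS.card_ne_zero
  rw [batchLoss, sum_congr rfl log_uv, sum_congr rfl log_vu, sum_const, nsmul_eq_mul]
  field_simp
  ring

theorem fullLoss_of_inner_eq (hN : 0 < N) (hdiag : ∀ i, ⟪u i, v i⟫ = a)
    (hoff : Pairwise fun i j ↦ ⟪u i, v j⟫ = b) :
    fullLoss u v = 2 * Real.log (1 + (N - 1) * Real.exp (b - a)) := by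
  have : NeZero N := ⟨hN.ne'⟩
  rw [fullLoss_eq_batchLoss_univ, batchLoss_of_inner_eq hdiag hoff univ_nonempty, card_fin]

theorem avgBatchLoss_of_inner_eq {B : ℕ} (hB : 0 < B) (hBN : B ≤ N)
    (hdiag : ∀ i, ⟪u i, v i⟫ = a) (hoff : Pairwise fun i j ↦ ⟪u i, v j⟫ = b) :
    avgBatchLoss B u v = 2 * Real.log (1 + (B - 1) * Real.exp (b - a)) :=
  avgBatchLoss_eq_of_forall_batchLoss_eq hBN fun S hS ↦ by
    rw [batchLoss_of_inner_eq hdiag hoff (card_pos.1 (hS ▸ hB)), hS]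

theorem log_eq_mul_log_of_avgBatchLoss_eq_mul_fullLoss {B : ℕ} (hB : 0 < B) (hBN : B ≤ N)
    (hdiag : ∀ i, ⟪u i, v i⟫ = a) (hoff : Pairwise fun i j ↦ ⟪u i, v j⟫ = b) {c : ℝ}
    (h : avgBatchLoss B u v = c * fullLoss u v) :
    Real.log (1 + (B - 1) * Real.exp (b - a)) =
      c * Real.log (1 + (N - 1) * Real.exp (b - a)) := by
  rw [avgBatchLoss_of_inner_eq hB hBN hdiag hoff,
    fullLoss_of_inner_eq (hB.trans_le hBN) hdiag hoff] at h
  linarith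

end

/-- The average mini-batch contrastive loss is neither identical to the full-batch
contrastive loss nor a constant multiple of it, over unit-norm configurations. -/
theorem no_constant_relating_avg_and_full (N B d : ℕ) (hB : 2 ≤ B) (hBN : B < N)
    (hd : N ≤ d) :
    ¬ ∃ c : ℝ, ∀ u v : Fin N → EuclideanSpace ℝ (Fin d),
      (∀ i, ‖u i‖ = 1) → (∀ i, ‖v i‖ = 1) →
      avgBatchLoss B u v = c * fullLoss u v := by
  rintro ⟨c, hc⟩
  have hB₀ : 0 < B := by omega
  have hB₁ : (1 : ℝ) < B := by exact_mod_cast hB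
  have hBN' : (B : ℝ) < N := by exact_mod_cast hBN
  obtain ⟨e, he⟩ : ∃ e : Fin N → EuclideanSpace ℝ (Fin d), Orthonormal ℝ e :=
    ⟨_, (EuclideanSpace.basisFun (Fin d) ℝ).orthonormal.comp _ (Fin.castLE_injective hd)⟩
  have inner_self (i : Fin N) : ⟪e i, e i⟫ = 1 := inner_self_eq_one_of_norm_eq_one (he.1 i)
  have collapsed : Real.log B = c * Real.log N := by
    let i₀ : Fin N := ⟨0, by omega⟩
    simpa using log_eq_mul_log_of_avgBatchLoss_eq_mul_fullLoss hB₀ hBN.le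
      (fun _ ↦ inner_self i₀) (fun _ _ _ ↦ inner_self i₀)
      (hc (fun _ ↦ e i₀) (fun _ ↦ e i₀) (fun _ ↦ he.1 i₀) (fun _ ↦ he.1 i₀))
  have orthonormal := log_eq_mul_log_of_avgBatchLoss_eq_mul_fullLoss hB₀ hBN.le
    inner_self he.2 (hc e e he.1 he.1)
  have c_ne_zero : c ≠ 0 := left_ne_zero_of_mul (collapsed ▸ (Real.log_pos hB₁).ne')
  have ratio_lt := strictMonoOn_log_one_add_sub_one_mul_div_log (Real.exp_pos (0 - 1))
    (Real.exp_lt_one_iff.2 (by norm_num)) hB₁ (hB₁.trans hBN') hBN'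
  simp only [collapsed, orthonormal, mul_div_mul_left _ _ c_ne_zero, lt_self_iff_false] at ratio_lt
end

section
/- Let 3 ≤ N ≤ d + 1 and B = 2. Let 𝒮 be a nonempty collection of two-element subsets of Fin N that is a strict subcollection, i.e., there exist distinct indices a, b ∈ Fin N with {a,b} ∉ 𝒮. Then for any pair (u⋆, v⋆) with u⋆ = v⋆ whose family (u⋆ i) forms a simplex ETF, there exist u, v : Fin N → EuclideanSpace ℝ (Fin d) with ‖u i‖ = ‖v i‖ = 1 for all i such that Σ_{S ∈ 𝒮} L_S(u,v) < Σ_{S ∈ 𝒮} L_S(u⋆,v⋆). Consequently the symmetric simplex-ETF configuration (the full-batch minimizer) does not minimize the mini-batch loss summed over 𝒮. -/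
open scoped RealInnerProductSpace BigOperators
open Finset

/-!
A batch loss with `u = v` and unit vectors increases with every off-diagonal inner product. If no
batch contains both `a` and `b`, then `⟪u a, u b⟫` never enters the loss, so `u a` and `u b` may
both be moved to their normalized midpoint `m`. For `k ≠ a, b` and a common negative inner product
`c`, `⟪m, u k⟫ = 2 * c / ‖u a + u b‖ < c` because `‖u a + u b‖ < 2`, so every batch that contains
`a` and some other index strictly improves.
-/

section MergePair

variable {ι E : Type*} [DecidableEq ι] [NormedAddCommGroup E] [InnerProductSpace ℝ E]

lemma add_ne_zero_of_inner_eq_inner {x y z : E} (heq : ⟪x, z⟫ = ⟪y, z⟫) (hne : ⟪x, z⟫ ≠ 0) :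
    x + y ≠ 0 := by
  intro h
  have hsum : ⟪x, z⟫ + ⟪y, z⟫ = 0 := by rw [← inner_add_left, h, inner_zero_left]
  exact hne (by linarith)

lemma inner_normalize_add_lt {x y z : E} (hx : ‖x‖ = 1) (hy : ‖y‖ = 1) (hxy : x ≠ y)
    (heq : ⟪x, z⟫ = ⟪y, z⟫) (hneg : ⟪x, z⟫ < 0) :
    ⟪NormedSpace.normalize (x + y), z⟫ < ⟪x, z⟫ := by
  have hsum : ⟪x + y, z⟫ = 2 * ⟪x, z⟫ := by rw [inner_add_left, ← heq, two_mul]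
  have hpos : 0 < ‖x + y‖ := norm_pos_iff.2 (add_ne_zero_of_inner_eq_inner heq hneg.ne)
  have hlt : ‖x + y‖ < 2 := by
    have h := norm_add_lt_of_not_sameRay ((not_sameRay_iff_of_norm_eq (hx.trans hy.symm)).2 hxy)
    rw [hx, hy] at h
    linarith
  rw [NormedSpace.normalize, real_inner_smul_left, hsum, inv_mul_lt_iff₀ hpos]
  exact mul_lt_mul_of_neg_right hlt hneg

/-- The family `u` with both `u a` and `u b` replaced by their normalized midpoint; the perturbation
that lowers the loss when no batch contains both `a` and `b`. If `u a + u b = 0`, the new vector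
is `0`. -/
noncomputable def mergePair (u : ι → E) (a b : ι) : ι → E :=
  fun k => if k = a ∨ k = b then NormedSpace.normalize (u a + u b) else u k

variable {u : ι → E} {a b i k : ι}

lemma mergePair_of_mem (hi : i = a ∨ i = b) :
    mergePair u a b i = NormedSpace.normalize (u a + u b) :=
  if_pos hi

lemma mergePair_of_notMem (hi : ¬(i = a ∨ i = b)) : mergePair u a b i = u i :=
  if_neg hi

lemma norm_mergePair (hu : ∀ i, ‖u i‖ = 1) (hab : u a + u b ≠ 0) (i : ι) :
    ‖mergePair u a b i‖ = 1 := by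
  by_cases hi : i = a ∨ i = b
  · rw [mergePair_of_mem hi, NormedSpace.norm_normalize hab]
  · rw [mergePair_of_notMem hi, hu]

variable {c : ℝ}

lemma inner_mergePair_lt (hu : ∀ i, ‖u i‖ = 1) (hc : c < 0)
    (hinner : ∀ i j, i ≠ j → ⟪u i, u j⟫ = c) (hab : a ≠ b)
    (hi : i = a ∨ i = b) (hk : ¬(k = a ∨ k = b)) :
    ⟪mergePair u a b i, mergePair u a b k⟫ < c := by
  obtain ⟨hka, hkb⟩ := not_or.1 hk
  have hak : ⟪u a, u k⟫ = c := hinner a k (Ne.symm hka)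
  have hbk : ⟪u b, u k⟫ = c := hinner b k (Ne.symm hkb)
  have hne : u a ≠ u b := by
    intro h
    have hself : ⟪u a, u b⟫ = 1 := by rw [← h, real_inner_self_eq_norm_sq, hu, one_pow]
    linarith [hinner a b hab]
  rw [mergePair_of_mem hi, mergePair_of_notMem hk]
  simpa only [hak] using
    inner_normalize_add_lt (hu a) (hu b) hne (hak.trans hbk.symm) (hak.trans_lt hc)

lemma inner_mergePair_le (hu : ∀ i, ‖u i‖ = 1) (hc : c < 0)
    (hinner : ∀ i j, i ≠ j → ⟪u i, u j⟫ = c) (hab : a ≠ b)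
    (hik : i ≠ k) (hsep : ¬((i = a ∨ i = b) ∧ (k = a ∨ k = b))) :
    ⟪mergePair u a b i, mergePair u a b k⟫ ≤ c := by
  by_cases hi : i = a ∨ i = b
  · exact (inner_mergePair_lt hu hc hinner hab hi fun hk => hsep ⟨hi, hk⟩).le
  by_cases hk : k = a ∨ k = b
  · rw [real_inner_comm]
    exact (inner_mergePair_lt hu hc hinner hab hk hi).le
  · rw [mergePair_of_notMem hi, mergePair_of_notMem hk, hinner i k hik]

end MergePair

section BatchLoss

variable {N d : ℕ} {S : Finset (Fin N)} {u w : Fin N → EuclideanSpace ℝ (Fin d)}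

lemma batchLoss_self (S : Finset (Fin N)) (u : Fin N → EuclideanSpace ℝ (Fin d)) :
    batchLoss S u u =
      2 / #S * ∑ i ∈ S, (Real.log (∑ j ∈ S, Real.exp ⟪u i, u j⟫) - ‖u i‖ ^ 2) := by
  have hlog : ∀ i ∈ S, Real.log (Real.exp ⟪u i, u i⟫ / ∑ j ∈ S, Real.exp ⟪u i, u j⟫) =
      -(Real.log (∑ j ∈ S, Real.exp ⟪u i, u j⟫) - ‖u i‖ ^ 2) := by
    intro i hi
    have hpos : 0 < ∑ j ∈ S, Real.exp ⟪u i, u j⟫ := sum_pos (fun j _ => Real.exp_pos _) ⟨i, hi⟩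
    rw [Real.log_div (Real.exp_ne_zero _) hpos.ne', Real.log_exp, real_inner_self_eq_norm_sq,
      neg_sub]
  rw [batchLoss, sum_congr rfl hlog, sum_neg_distrib]
  ring

lemma batchLoss_self_le (hnorm : ∀ i ∈ S, ‖w i‖ = ‖u i‖)
    (hle : ∀ i ∈ S, ∀ j ∈ S, ⟪w i, w j⟫ ≤ ⟪u i, u j⟫) :
    batchLoss S w w ≤ batchLoss S u u := by
  rw [batchLoss_self, batchLoss_self]
  gcongr with i hi j hj
  · exact sum_pos (fun j _ => Real.exp_pos _) ⟨i, hi⟩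
  · exact hle i hi j hj
  · exact (hnorm i hi).ge

lemma batchLoss_self_lt (hnorm : ∀ i ∈ S, ‖w i‖ = ‖u i‖)
    (hle : ∀ i ∈ S, ∀ j ∈ S, ⟪w i, w j⟫ ≤ ⟪u i, u j⟫)
    (hlt : ∃ i ∈ S, ∃ j ∈ S, ⟪w i, w j⟫ < ⟪u i, u j⟫) :
    batchLoss S w w < batchLoss S u u := by
  obtain ⟨i₀, hi₀, j₀, hj₀, hlt⟩ := hlt
  have hcard : 0 < #S := card_pos.2 ⟨i₀, hi₀⟩
  have hpos : ∀ i, 0 < ∑ j ∈ S, Real.exp ⟪w i, w j⟫ :=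
    fun i => sum_pos (fun j _ => Real.exp_pos _) ⟨i₀, hi₀⟩
  rw [batchLoss_self, batchLoss_self]
  refine mul_lt_mul_of_pos_left (sum_lt_sum (fun i hi => ?_) ⟨i₀, hi₀, ?_⟩) (by positivity)
  · rw [hnorm i hi]
    gcongr with j hj
    · exact hpos i
    · exact hle i hi j hj
  · rw [hnorm i₀ hi₀]
    refine sub_lt_sub_right (Real.log_lt_log (hpos i₀) (sum_lt_sum (fun j hj => ?_) ?_)) _
    · exact Real.exp_le_exp.2 (hle i₀ hi₀ j hj)
    · exact ⟨j₀, hj₀, Real.exp_lt_exp.2 hlt⟩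

end BatchLoss

lemma exists_separated_pair_mem_nontrivial {α : Type*} {𝒮 : Finset (Finset α)}
    (hbatch : ∃ S ∈ 𝒮, S.Nontrivial) (hsep : ∃ a b, a ≠ b ∧ ∀ S ∈ 𝒮, a ∈ S → b ∉ S) :
    ∃ a b, a ≠ b ∧ (∀ S ∈ 𝒮, a ∈ S → b ∉ S) ∧ ∃ S ∈ 𝒮, a ∈ S ∧ S.Nontrivial := by
  obtain ⟨a, b, hab, hsep⟩ := hsep
  by_cases ha : ∃ S ∈ 𝒮, a ∈ S ∧ S.Nontrivial
  · exact ⟨a, b, hab, hsep, ha⟩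
  -- `a` shares no batch with any other index, so it can play the role of `b`.
  obtain ⟨S, hS, hSnt⟩ := hbatch
  obtain ⟨i, hi⟩ := hSnt.nonempty
  have hia : i ≠ a := fun h => ha ⟨S, hS, h ▸ hi, hSnt⟩
  exact ⟨i, a, hia, fun T hT hiT haT => ha ⟨T, hT, haT, i, hiT, a, haT, hia⟩, S, hS, hi, hSnt⟩

lemma notMem_of_mem_of_pair_notMem {α : Type*} [DecidableEq α] {𝒮 : Finset (Finset α)}
    (hcard : ∀ S ∈ 𝒮, #S = 2) {a b : α} (hab : a ≠ b) (hmissing : {a, b} ∉ 𝒮) :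
    ∀ S ∈ 𝒮, a ∈ S → b ∉ S := by
  intro S hS ha hb
  have hpair : {a, b} = S :=
    eq_of_subset_of_card_le (by grind) (by rw [hcard S hS, card_pair hab])
  exact hmissing (hpair ▸ hS)

theorem etf_not_minimizer_of_strict_subcollection_general {N d : ℕ} {𝒮 : Finset (Finset (Fin N))}
    (hbatch : ∃ S ∈ 𝒮, S.Nontrivial) (hsep : ∃ a b, a ≠ b ∧ ∀ S ∈ 𝒮, a ∈ S → b ∉ S)
    {u : Fin N → EuclideanSpace ℝ (Fin d)} {c : ℝ} (hu : ∀ i, ‖u i‖ = 1) (hc : c < 0)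
    (hinner : ∀ i j, i ≠ j → ⟪u i, u j⟫ = c) :
    ∃ w : Fin N → EuclideanSpace ℝ (Fin d), (∀ i, ‖w i‖ = 1) ∧
      ∑ S ∈ 𝒮, batchLoss S w w < ∑ S ∈ 𝒮, batchLoss S u u := by
  obtain ⟨a, b, hab, hsep, T, hT, haT, hTnt⟩ := exists_separated_pair_mem_nontrivial hbatch hsep
  obtain ⟨k, hkT, hka⟩ := hTnt.exists_ne a
  have hkb : k ≠ b := fun h => hsep T hT haT (h ▸ hkT)
  have hak : ⟪u a, u k⟫ = c := hinner a k hka.symm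
  have hbk : ⟪u b, u k⟫ = c := hinner b k hkb.symm
  have hadd : u a + u b ≠ 0 :=
    add_ne_zero_of_inner_eq_inner (hak.trans hbk.symm) (hak.trans_ne hc.ne)
  have hw : ∀ i, ‖mergePair u a b i‖ = 1 := norm_mergePair hu hadd
  have hnorm : ∀ i, ‖mergePair u a b i‖ = ‖u i‖ := fun i => (hw i).trans (hu i).symm
  have hle : ∀ S ∈ 𝒮, ∀ i ∈ S, ∀ j ∈ S,
      ⟪mergePair u a b i, mergePair u a b j⟫ ≤ ⟪u i, u j⟫ := by
    intro S hS i hi j hj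
    obtain rfl | hij := eq_or_ne i j
    · simp only [real_inner_self_eq_norm_sq, hnorm, le_refl]
    · rw [hinner i j hij]
      exact inner_mergePair_le hu hc hinner hab hij (by grind)
  have hlt : ⟪mergePair u a b a, mergePair u a b k⟫ < ⟪u a, u k⟫ :=
    (inner_mergePair_lt hu hc hinner hab (.inl rfl) (not_or.2 ⟨hka, hkb⟩)).trans_eq hak.symm
  exact ⟨mergePair u a b, hw, sum_lt_sum
    (fun S hS => batchLoss_self_le (fun i _ => hnorm i) (hle S hS))
    ⟨T, hT, batchLoss_self_lt (fun i _ => hnorm i) (hle T hT) ⟨a, haT, k, hkT, hlt⟩⟩⟩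

/-- For `B = 2` and `3 ≤ N ≤ d + 1`: if a nonempty collection of two-element
mini-batches misses some pair `{a, b}`, then the symmetric simplex-ETF configuration
does not minimize the mini-batch loss summed over the collection. -/
theorem etf_not_minimizer_of_strict_subcollection (N d : ℕ) (hN3 : 3 ≤ N) (hNd : N ≤ d + 1)
    (𝒮 : Finset (Finset (Fin N))) (hne : 𝒮.Nonempty)
    (hcard : ∀ S ∈ 𝒮, S.card = 2)
    (hstrict : ∃ a b : Fin N, a ≠ b ∧ ({a, b} : Finset (Fin N)) ∉ 𝒮)
    (ustar vstar : Fin N → EuclideanSpace ℝ (Fin d))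
    (hsymm : ustar = vstar) (hetf : IsSimplexETF ustar) :
    ∃ u v : Fin N → EuclideanSpace ℝ (Fin d),
      (∀ i, ‖u i‖ = 1) ∧ (∀ i, ‖v i‖ = 1) ∧
      ∑ S ∈ 𝒮, batchLoss S u v < ∑ S ∈ 𝒮, batchLoss S ustar vstar := by
  subst hsymm
  obtain ⟨a, b, hab, hmissing⟩ := hstrict
  have hbatch : ∃ S ∈ 𝒮, S.Nontrivial :=
    hne.imp fun S hS => ⟨hS, one_lt_card_iff_nontrivial.1 (by simp only [hcard S hS, one_lt_two])⟩
  have hneg : -(1 / ((N : ℝ) - 1)) < 0 :=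
    neg_lt_zero.2 (one_div_pos.2 (sub_pos.2 (by exact_mod_cast (by lia : 1 < N))))
  obtain ⟨w, hw, hlt⟩ := etf_not_minimizer_of_strict_subcollection_general hbatch
    ⟨a, b, hab, notMem_of_mem_of_pair_notMem hcard hab hmissing⟩ hetf.1 hneg hetf.2
  exact ⟨w, w, hw, hw, hlt⟩
end

section
/- Let 2 ≤ B and 3 ≤ N ≤ d + 1. Let 𝒮 be a nonempty collection of size-B subsets of Fin N such that there exist distinct indices a, b ∈ Fin N with {a,b} ⊄ S for every S ∈ 𝒮 (i.e., the two data points a and b never belong together to any selected mini-batch). Then for any pair (u⋆, v⋆) with u⋆ = v⋆ whose family (u⋆ i) forms a simplex ETF, there exist u, v : Fin N → EuclideanSpace ℝ (Fin d) with ‖u i‖ = ‖v i‖ = 1 for all i such that Σ_{S ∈ 𝒮} L_S(u,v) < Σ_{S ∈ 𝒮} L_S(u⋆,v⋆); hence the minimizer of the mini-batch loss over 𝒮 is not the full-batch minimizer. -/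
open scoped RealInnerProductSpace BigOperators
open Finset

/-!
Removing from every vector of an equicorrelated unit family its component along one member `x b`,
and normalizing, turns the common inner product `c` of the remaining vectors into `c / (1 + c)`,
which is smaller than `c` unless `c = 0`. The vector `x b` itself is destroyed by this, but since no
mini-batch contains both `a` and `b`, it can be replaced by a second copy of `x a`: inside each
mini-batch all inner products between distinct points go down, and hence so does its loss.
-/

section LogSoftmax

variable {ι : Type*} {S : Finset ι}

theorem log_exp_div_sum_exp_lt (hS : S.Nontrivial) {f g : ι → ℝ} {i : ι}
    (hmargin : ∀ j ∈ S, j ≠ i → g i - g j < f i - f j) :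
    Real.log (Real.exp (g i) / ∑ j ∈ S, Real.exp (g j)) <
      Real.log (Real.exp (f i) / ∑ j ∈ S, Real.exp (f j)) := by
  have sum_exp_pos (h : ι → ℝ) : 0 < ∑ j ∈ S, Real.exp (h j) :=
    sum_pos (fun j _ => Real.exp_pos (h j)) hS.nonempty
  refine Real.log_lt_log (div_pos (Real.exp_pos _) (sum_exp_pos g)) ?_
  rw [div_lt_div_iff₀ (sum_exp_pos g) (sum_exp_pos f), mul_sum, mul_sum]
  simp only [← Real.exp_add]
  have exponent_lt : ∀ j ∈ S, j ≠ i → g i + f j < f i + g j := fun j hj hji => by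
    linarith [hmargin j hj hji]
  refine sum_lt_sum (fun j hj => Real.exp_le_exp.mpr ?_) ?_
  · obtain rfl | hji := eq_or_ne j i
    · exact (add_comm _ _).le
    · exact (exponent_lt j hj hji).le
  · obtain ⟨j, hj, hji⟩ := hS.exists_ne i
    exact ⟨j, hj, Real.exp_lt_exp.mpr (exponent_lt j hj hji)⟩

theorem sum_log_exp_div_sum_exp_lt (hS : S.Nontrivial) {f g : ι → ι → ℝ}
    (hdiag : ∀ i ∈ S, g i i ≤ f i i) (hoff : ∀ i ∈ S, ∀ j ∈ S, i ≠ j → f i j < g i j) :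
    ∑ i ∈ S, Real.log (Real.exp (g i i) / ∑ j ∈ S, Real.exp (g i j)) <
      ∑ i ∈ S, Real.log (Real.exp (f i i) / ∑ j ∈ S, Real.exp (f i j)) :=
  sum_lt_sum_of_nonempty hS.nonempty fun i hi =>
    log_exp_div_sum_exp_lt hS fun j hj hji => by
      linarith [hdiag i hi, hoff i hi j hj hji.symm]

end LogSoftmax

theorem batchLoss_lt_batchLoss {N d : ℕ} {S : Finset (Fin N)} (hS : S.Nontrivial)
    {u v x y : Fin N → EuclideanSpace ℝ (Fin d)}
    (hdiag : ∀ i ∈ S, ⟪x i, y i⟫ ≤ ⟪u i, v i⟫)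
    (hoff : ∀ i ∈ S, ∀ j ∈ S, i ≠ j → ⟪u i, v j⟫ < ⟪x i, y j⟫) :
    batchLoss S u v < batchLoss S x y := by
  have rows := sum_log_exp_div_sum_exp_lt hS
    (f := fun i j => ⟪u i, v j⟫) (g := fun i j => ⟪x i, y j⟫) hdiag hoff
  have columns := sum_log_exp_div_sum_exp_lt hS
    (f := fun i j => ⟪v i, u j⟫) (g := fun i j => ⟪y i, x j⟫)
    (fun i hi => by simpa only [real_inner_comm] using hdiag i hi)
    (fun i hi j hj hij => by simpa only [real_inner_comm] using hoff j hj i hi hij.symm)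
  have weight_pos : 0 < 1 / (#S : ℝ) :=
    one_div_pos.mpr (Nat.cast_pos.mpr hS.nonempty.card_pos)
  unfold batchLoss
  linarith [mul_lt_mul_of_pos_left rows weight_pos, mul_lt_mul_of_pos_left columns weight_pos]

theorem injOn_update_id {ι : Type*} [DecidableEq ι] {a b : ι} {S : Finset ι}
    (hS : ¬ ({a, b} : Finset ι) ⊆ S) : Set.InjOn (Function.update id b a) S := by
  intro i hi j hj hij
  simp only [insert_subset_iff, singleton_subset_iff] at hS
  grind [Function.update_apply]

section UnitRejection

variable {E : Type*} [NormedAddCommGroup E] [InnerProductSpace ℝ E] {e y z : E} {c : ℝ}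

/-- The component of `y` orthogonal to the unit vector `e` (the vector rejection of `y` from `e`),
rescaled to unit length. It is `0` when `y` is a multiple of `e`. -/
noncomputable def unitRejection (e y : E) : E :=
  NormedSpace.normalize (y - ⟪e, y⟫ • e)

theorem inner_sub_inner_smul_sub_inner_smul (he : ‖e‖ = 1) (y z : E) :
    ⟪y - ⟪e, y⟫ • e, z - ⟪e, z⟫ • e⟫ = ⟪y, z⟫ - ⟪e, y⟫ * ⟪e, z⟫ := by
  simp only [inner_sub_left, inner_sub_right, real_inner_smul_left, real_inner_smul_right,
    real_inner_self_eq_norm_sq, he, real_inner_comm e y]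
  ring

theorem norm_sub_inner_smul_sq (he : ‖e‖ = 1) (hy : ‖y‖ = 1) :
    ‖y - ⟪e, y⟫ • e‖ ^ 2 = 1 - ⟪e, y⟫ ^ 2 := by
  rw [← real_inner_self_eq_norm_sq, inner_sub_inner_smul_sub_inner_smul he,
    real_inner_self_eq_norm_sq, hy]
  ring

theorem norm_unitRejection (he : ‖e‖ = 1) (hy : ‖y‖ = 1) (hey : |⟪e, y⟫| < 1) :
    ‖unitRejection e y‖ = 1 := by
  refine NormedSpace.norm_normalize fun h => ?_
  have norm_sq := norm_sub_inner_smul_sq he hy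
  rw [h, norm_zero] at norm_sq
  linarith [(sq_lt_one_iff_abs_lt_one _).mpr hey]

theorem inner_unitRejection_of_inner_eq (he : ‖e‖ = 1) (hy : ‖y‖ = 1) (hz : ‖z‖ = 1)
    (hey : ⟪e, y⟫ = c) (hez : ⟪e, z⟫ = c) (hyz : ⟪y, z⟫ = c) (hc : |c| < 1) :
    ⟪unitRejection e y, unitRejection e z⟫ = c / (1 + c) := by
  obtain ⟨neg_one_lt, lt_one⟩ := abs_lt.mp hc
  have norm_y := norm_sub_inner_smul_sq he hy
  have norm_z := norm_sub_inner_smul_sq he hz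
  have norm_eq : ‖z - ⟪e, z⟫ • e‖ = ‖y - ⟪e, y⟫ • e‖ := by
    rw [← sq_eq_sq₀ (norm_nonneg _) (norm_nonneg _), norm_y, norm_z, hey, hez]
  calc ⟪unitRejection e y, unitRejection e z⟫
      = (⟪y, z⟫ - ⟪e, y⟫ * ⟪e, z⟫) / ‖y - ⟪e, y⟫ • e‖ ^ 2 := by
        rw [← inner_sub_inner_smul_sub_inner_smul he, unitRejection, unitRejection,
          NormedSpace.normalize, NormedSpace.normalize, norm_eq, real_inner_smul_left,
          real_inner_smul_right]
        ring
    _ = (c - c * c) / (1 - c ^ 2) := by rw [norm_y, hyz, hey, hez]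
    _ = c / (1 + c) := by
        rw [div_eq_div_iff (by nlinarith) (by linarith)]
        ring

end UnitRejection

theorem div_one_add_lt_self {c : ℝ} (hc : -1 < c) (hc0 : c ≠ 0) : c / (1 + c) < c := by
  rw [div_lt_iff₀ (by linarith)]
  nlinarith [sq_pos_of_ne_zero hc0]

/-- A family of unit vectors any two distinct members of which have inner product `c`;
a simplex ETF of `N` vectors is the case `c = -1 / (N - 1)`. -/
structure IsEquicorrelated {ι E : Type*} [NormedAddCommGroup E] [InnerProductSpace ℝ E]
    (x : ι → E) (c : ℝ) : Prop where
  norm_eq_one (i : ι) : ‖x i‖ = 1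
  inner_eq {i j : ι} (hij : i ≠ j) : ⟪x i, x j⟫ = c

/-- The competitor to the family `x`: the index `b` is merged into `a`, and then every vector is
replaced by its unit rejection from `x b`. -/
noncomputable def mergedRejection {ι E : Type*} [DecidableEq ι] [NormedAddCommGroup E]
    [InnerProductSpace ℝ E] (x : ι → E) (a b : ι) (i : ι) : E :=
  unitRejection (x b) (x (Function.update id b a i))

namespace IsEquicorrelated

variable {ι E : Type*} [DecidableEq ι] [NormedAddCommGroup E] [InnerProductSpace ℝ E]
  {x : ι → E} {c : ℝ} {a b : ι}

theorem inner_update_id (hx : IsEquicorrelated x c) (hab : a ≠ b) (i : ι) :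
    ⟪x b, x (Function.update id b a i)⟫ = c := by
  refine hx.inner_eq ?_
  grind [Function.update_apply]

theorem norm_mergedRejection (hx : IsEquicorrelated x c) (hc : |c| < 1) (hab : a ≠ b) (i : ι) :
    ‖mergedRejection x a b i‖ = 1 :=
  norm_unitRejection (hx.norm_eq_one b) (hx.norm_eq_one _) (by rwa [hx.inner_update_id hab])

theorem inner_mergedRejection_lt (hx : IsEquicorrelated x c) (hc : |c| < 1) (hc0 : c ≠ 0)
    (hab : a ≠ b) {i j : ι} (hij : Function.update id b a i ≠ Function.update id b a j) :
    ⟪mergedRejection x a b i, mergedRejection x a b j⟫ < c :=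
  calc ⟪mergedRejection x a b i, mergedRejection x a b j⟫
      = c / (1 + c) :=
        inner_unitRejection_of_inner_eq (hx.norm_eq_one b) (hx.norm_eq_one _) (hx.norm_eq_one _)
          (hx.inner_update_id hab i) (hx.inner_update_id hab j) (hx.inner_eq hij) hc
    _ < c := div_one_add_lt_self (neg_lt_of_abs_lt hc) hc0

end IsEquicorrelated

theorem batchLoss_mergedRejection_lt {N d : ℕ} {x : Fin N → EuclideanSpace ℝ (Fin d)} {c : ℝ}
    (hx : IsEquicorrelated x c) (hc : |c| < 1) (hc0 : c ≠ 0) {a b : Fin N} (hab : a ≠ b)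
    {S : Finset (Fin N)} (hS : S.Nontrivial) (hsep : ¬ ({a, b} : Finset (Fin N)) ⊆ S) :
    batchLoss S (mergedRejection x a b) (mergedRejection x a b) < batchLoss S x x := by
  refine batchLoss_lt_batchLoss hS (fun i _ => ?_) fun i hi j hj hij => ?_
  · rw [real_inner_self_eq_norm_sq, real_inner_self_eq_norm_sq, hx.norm_eq_one,
      hx.norm_mergedRejection hc hab]
  · rw [hx.inner_eq hij]
    exact hx.inner_mergedRejection_lt hc hc0 hab ((injOn_update_id hsep).ne hi hj hij)

theorem etf_not_minimizer_of_never_together_general {N d : ℕ} {𝒮 : Finset (Finset (Fin N))}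
    (hne : 𝒮.Nonempty) (hnontrivial : ∀ S ∈ 𝒮, S.Nontrivial)
    (hsep : ∃ a b : Fin N, a ≠ b ∧ ∀ S ∈ 𝒮, ¬ ({a, b} : Finset (Fin N)) ⊆ S)
    {x : Fin N → EuclideanSpace ℝ (Fin d)} {c : ℝ} (hx : IsEquicorrelated x c)
    (hc : |c| < 1) (hc0 : c ≠ 0) :
    ∃ u : Fin N → EuclideanSpace ℝ (Fin d),
      (∀ i, ‖u i‖ = 1) ∧ ∑ S ∈ 𝒮, batchLoss S u u < ∑ S ∈ 𝒮, batchLoss S x x := by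
  obtain ⟨a, b, hab, hsep⟩ := hsep
  exact ⟨mergedRejection x a b, hx.norm_mergedRejection hc hab,
    sum_lt_sum_of_nonempty hne fun S hS =>
      batchLoss_mergedRejection_lt hx hc hc0 hab (hnontrivial S hS) (hsep S hS)⟩

theorem abs_neg_one_div_sub_one_lt_one {N : ℕ} (hN : 3 ≤ N) : |-(1 / ((N : ℝ) - 1))| < 1 := by
  have hN_real : (3 : ℝ) ≤ N := by exact_mod_cast hN
  rw [abs_neg, abs_of_pos (one_div_pos.mpr (by linarith)), div_lt_one (by linarith)]
  linarith

theorem neg_one_div_sub_one_ne_zero {N : ℕ} (hN : N ≠ 1) : -(1 / ((N : ℝ) - 1)) ≠ 0 :=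
  neg_ne_zero.mpr (one_div_ne_zero (sub_ne_zero.mpr (Nat.cast_ne_one.mpr hN)))

theorem IsSimplexETF.isEquicorrelated {N d : ℕ} {u : Fin N → EuclideanSpace ℝ (Fin d)}
    (hu : IsSimplexETF u) : IsEquicorrelated u (-(1 / ((N : ℝ) - 1))) :=
  ⟨hu.1, hu.2 _ _⟩

/-- For `2 ≤ B` and `3 ≤ N ≤ d + 1`: if there are two indices `a ≠ b` that never
belong together to any selected mini-batch of size `B`, then the symmetric
simplex-ETF configuration does not minimize the mini-batch loss summed over the
selected collection. -/
theorem etf_not_minimizer_of_never_together (N B d : ℕ) (hB : 2 ≤ B)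
    (hN3 : 3 ≤ N) (hNd : N ≤ d + 1)
    (𝒮 : Finset (Finset (Fin N))) (hne : 𝒮.Nonempty)
    (hcard : ∀ S ∈ 𝒮, S.card = B)
    (hsep : ∃ a b : Fin N, a ≠ b ∧ ∀ S ∈ 𝒮, ¬ ({a, b} : Finset (Fin N)) ⊆ S)
    (ustar vstar : Fin N → EuclideanSpace ℝ (Fin d))
    (hsymm : ustar = vstar) (hetf : IsSimplexETF ustar) :
    ∃ u v : Fin N → EuclideanSpace ℝ (Fin d),
      (∀ i, ‖u i‖ = 1) ∧ (∀ i, ‖v i‖ = 1) ∧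
      ∑ S ∈ 𝒮, batchLoss S u v < ∑ S ∈ 𝒮, batchLoss S ustar vstar := by
  subst hsymm
  obtain ⟨u, hu, hlt⟩ := etf_not_minimizer_of_never_together_general hne
    (fun S hS => one_lt_card_iff_nontrivial.mp ((hcard S hS).symm ▸ hB)) hsep
    hetf.isEquicorrelated (abs_neg_one_div_sub_one_lt_one hN3)
    (neg_one_div_sub_one_ne_zero (by lia))
  exact ⟨u, u, hu, hu, hlt⟩
end

section
/- Let d ≥ 2 and N = 2d. Let g : ℝ → ℝ be convex and nonincreasing on [0, 4]. Let (u i), i ∈ Fin N, be unit vectors in EuclideanSpace ℝ (Fin d) that are antipodal, i.e., for each i there exists j with u j = −(u i). Then Σ_i Σ_{j ≠ i} g(‖u i − u j‖²) ≥ N·g(4) + N·(N−2)·g(2), and equality holds when (u i) forms a simplex cross-polytope. Consequently, among antipodal unit-norm configurations with N = 2d, the energy Σ_i Σ_{j ≠ i} g(‖u i − u j‖²) is minimized by the simplex cross-polytope. -/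
open scoped RealInnerProductSpace BigOperators
open Finset

/-!
Every ordered pair `(i, j)` with `u j = -u i` contributes `g 4`, so choosing one antipode for each
index accounts for the term `N * g 4`. The squared distances over the remaining `N * (N - 2)` pairs
are `2 - 2 * ⟪u i, u j⟫`. The inner products over these pairs sum to `‖∑ i, u i‖ ^ 2 ≥ 0`, because
the diagonal and the chosen antipodal pairs cancel, so the squared distances average at most `2`.
Jensen's inequality and monotonicity of `g` then give the bound, and for a cross-polytope each of
these squared distances is exactly `2`.
-/

lemma card_mul_le_sum_of_sum_le_card_mul {κ 𝕜 : Type*} [Field 𝕜] [LinearOrder 𝕜]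
    [IsStrictOrderedRing 𝕜] {s : Set 𝕜} {g : 𝕜 → 𝕜} {t : Finset κ} {x : κ → 𝕜} {a : 𝕜}
    (hconv : ConvexOn 𝕜 s g) (hanti : AntitoneOn g s) (ha : a ∈ s)
    (hx : ∀ k ∈ t, x k ∈ s) (hsum : ∑ k ∈ t, x k ≤ #t * a) :
    #t * g a ≤ ∑ k ∈ t, g (x k) := by
  rcases t.eq_empty_or_nonempty with rfl | ht
  · simp
  have hcard : (0 : 𝕜) < #t := by exact_mod_cast ht.card_pos
  have hweights : ∑ _k ∈ t, (#t : 𝕜)⁻¹ = 1 := by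
    rw [sum_const, nsmul_eq_mul, mul_inv_cancel₀ hcard.ne']
  have hmean_mem : ∑ k ∈ t, (#t : 𝕜)⁻¹ • x k ∈ s :=
    hconv.1.sum_mem (fun _ _ => by positivity) hweights hx
  have hmean_le : ∑ k ∈ t, (#t : 𝕜)⁻¹ • x k ≤ a := by
    rwa [← smul_sum, smul_eq_mul, inv_mul_le_iff₀ hcard]
  have hjensen : g a ≤ ∑ k ∈ t, (#t : 𝕜)⁻¹ • g (x k) :=
    (hanti hmean_mem ha hmean_le).trans
      (hconv.map_sum_le (fun _ _ => by positivity) hweights hx)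
  rwa [← smul_sum, smul_eq_mul, le_inv_mul_iff₀ hcard] at hjensen

section NonAntipodalPairs

variable {ι : Type*} [Fintype ι] [DecidableEq ι] {σ : ι → ι}

/-- The ordered pairs `(i, j)` in which `j` is neither `i` nor `σ i`. Here `σ i` is the index of a
chosen antipode of the `i`-th vector; other antipodes of that vector may still occur as `j`. The
pairs live in a sigma type so that sums over them split by the first index. -/
def nonAntipodalPairs (σ : ι → ι) : Finset (Σ _ : ι, ι) :=
  univ.sigma fun i => (univ.erase i).erase (σ i)

lemma mem_nonAntipodalPairs {p : Σ _ : ι, ι} :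
    p ∈ nonAntipodalPairs σ ↔ p.2 ≠ σ p.1 ∧ p.2 ≠ p.1 := by
  simp [nonAntipodalPairs]

lemma sum_sum_erase_eq_sum_add_sum_nonAntipodalPairs {M : Type*} [AddCommMonoid M]
    (hσ : ∀ i, σ i ≠ i) (f : ι → ι → M) :
    ∑ i, ∑ j ∈ univ.erase i, f i j =
      ∑ i, f i (σ i) + ∑ p ∈ nonAntipodalPairs σ, f p.1 p.2 := by
  rw [nonAntipodalPairs, sum_sigma, ← sum_add_distrib]
  exact sum_congr rfl fun i _ =>
    (add_sum_erase _ _ (mem_erase.mpr ⟨hσ i, mem_univ _⟩)).symm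

lemma card_nonAntipodalPairs (hσ : ∀ i, σ i ≠ i) :
    (#(nonAntipodalPairs σ) : ℝ) = Fintype.card ι * ((Fintype.card ι : ℝ) - 2) := by
  have hcount := sum_sum_erase_eq_sum_add_sum_nonAntipodalPairs hσ fun _ _ => (1 : ℝ)
  have hrow (i : ι) : (#(univ.erase i) : ℝ) = Fintype.card ι - 1 := by
    rw [cast_card_erase_of_mem (mem_univ i), card_univ]
  simp only [sum_const, hrow, card_univ, nsmul_eq_mul, mul_one] at hcount
  linarith

end NonAntipodalPairs

section UnitVectors

variable {E : Type*} [NormedAddCommGroup E] [InnerProductSpace ℝ E]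

lemma norm_sub_sq_eq_two_sub_two_mul_inner {x y : E} (hx : ‖x‖ = 1) (hy : ‖y‖ = 1) :
    ‖x - y‖ ^ 2 = 2 - 2 * ⟪x, y⟫ := by
  rw [norm_sub_sq_real, hx, hy]
  ring

lemma norm_sub_sq_mem_Icc_zero_four {x y : E} (hx : ‖x‖ = 1) (hy : ‖y‖ = 1) :
    ‖x - y‖ ^ 2 ∈ Set.Icc (0 : ℝ) 4 := by
  rw [norm_sub_sq_eq_two_sub_two_mul_inner hx hy]
  constructor
  · linarith [real_inner_le_one_of_norm_eq_one hx hy]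
  · linarith [neg_one_le_real_inner_of_norm_eq_one hx hy]

variable {ι : Type*} {u : ι → E} {σ : ι → ι} {g : ℝ → ℝ}

lemma ne_self_of_inner_eq_neg_one (hσ : ∀ i, ⟪u i, u (σ i)⟫ = -1) (i : ι) : σ i ≠ i := by
  intro hfixed
  have hself : 0 ≤ ⟪u i, u i⟫ := real_inner_self_nonneg
  have hinner := hσ i
  rw [hfixed] at hinner
  linarith

variable [Fintype ι]

lemma sum_sum_inner_eq_norm_sum_sq (u : ι → E) : ∑ i, ∑ j, ⟪u i, u j⟫ = ‖∑ i, u i‖ ^ 2 := by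
  rw [← real_inner_self_eq_norm_sq, sum_inner]
  simp only [inner_sum]

variable [DecidableEq ι]

lemma sum_inner_nonAntipodalPairs (hu : ∀ i, ‖u i‖ = 1) (hσ : ∀ i, ⟪u i, u (σ i)⟫ = -1) :
    ∑ p ∈ nonAntipodalPairs σ, ⟪u p.1, u p.2⟫ = ‖∑ i, u i‖ ^ 2 := by
  have hsplit := sum_sum_erase_eq_sum_add_sum_nonAntipodalPairs (ne_self_of_inner_eq_neg_one hσ)
    fun i j => ⟪u i, u j⟫
  have hdiag (i : ι) : ∑ j ∈ univ.erase i, ⟪u i, u j⟫ = ∑ j, ⟪u i, u j⟫ - 1 := by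
    rw [sum_erase_eq_sub (mem_univ i), real_inner_self_eq_norm_sq, hu, one_pow]
  simp only [hdiag, hσ, sum_sub_distrib, sum_neg_distrib, sum_sum_inner_eq_norm_sum_sq] at hsplit
  linarith

lemma sum_norm_sub_sq_nonAntipodalPairs_le (hu : ∀ i, ‖u i‖ = 1)
    (hσ : ∀ i, ⟪u i, u (σ i)⟫ = -1) :
    ∑ p ∈ nonAntipodalPairs σ, ‖u p.1 - u p.2‖ ^ 2 ≤ #(nonAntipodalPairs σ) * 2 := by
  calc ∑ p ∈ nonAntipodalPairs σ, ‖u p.1 - u p.2‖ ^ 2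
      = ∑ p ∈ nonAntipodalPairs σ, (2 - 2 * ⟪u p.1, u p.2⟫) :=
        sum_congr rfl fun p _ => norm_sub_sq_eq_two_sub_two_mul_inner (hu p.1) (hu p.2)
    _ = #(nonAntipodalPairs σ) * 2 - 2 * ‖∑ i, u i‖ ^ 2 := by
        rw [sum_sub_distrib, sum_const, nsmul_eq_mul, ← mul_sum,
          sum_inner_nonAntipodalPairs hu hσ]
    _ ≤ #(nonAntipodalPairs σ) * 2 := sub_le_self _ (by positivity)

/-- The energy of the family `u` for the potential `g`, a function of the squared distance. Each
unordered pair of distinct indices is counted twice. -/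
def pairEnergy (g : ℝ → ℝ) (u : ι → E) : ℝ :=
  ∑ i, ∑ j ∈ univ.erase i, g (‖u i - u j‖ ^ 2)

lemma pairEnergy_eq_add_sum_nonAntipodalPairs (hu : ∀ i, ‖u i‖ = 1)
    (hσ : ∀ i, ⟪u i, u (σ i)⟫ = -1) :
    pairEnergy g u = Fintype.card ι * g 4 +
      ∑ p ∈ nonAntipodalPairs σ, g (‖u p.1 - u p.2‖ ^ 2) := by
  have hdist (i : ι) : ‖u i - u (σ i)‖ ^ 2 = 4 := by
    rw [norm_sub_sq_eq_two_sub_two_mul_inner (hu i) (hu (σ i)), hσ]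
    norm_num
  rw [pairEnergy, sum_sum_erase_eq_sum_add_sum_nonAntipodalPairs (ne_self_of_inner_eq_neg_one hσ)
    fun i j => g (‖u i - u j‖ ^ 2)]
  simp only [hdist, sum_const, card_univ, nsmul_eq_mul]

theorem le_pairEnergy_of_inner_eq_neg_one (hconv : ConvexOn ℝ (Set.Icc (0 : ℝ) 4) g)
    (hmono : AntitoneOn g (Set.Icc (0 : ℝ) 4)) (hu : ∀ i, ‖u i‖ = 1)
    (hσ : ∀ i, ⟪u i, u (σ i)⟫ = -1) :
    Fintype.card ι * g 4 + Fintype.card ι * ((Fintype.card ι : ℝ) - 2) * g 2 ≤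
      pairEnergy g u := by
  rw [pairEnergy_eq_add_sum_nonAntipodalPairs hu hσ,
    ← card_nonAntipodalPairs (ne_self_of_inner_eq_neg_one hσ)]
  gcongr
  exact card_mul_le_sum_of_sum_le_card_mul hconv hmono (by norm_num)
    (fun p _ => norm_sub_sq_mem_Icc_zero_four (hu p.1) (hu p.2))
    (sum_norm_sub_sq_nonAntipodalPairs_le hu hσ)

theorem pairEnergy_eq_of_inner_eq_zero (hu : ∀ i, ‖u i‖ = 1)
    (hσ : ∀ i, ⟪u i, u (σ i)⟫ = -1) (horth : ∀ i k, k ≠ i → k ≠ σ i → ⟪u i, u k⟫ = 0) :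
    pairEnergy g u =
      Fintype.card ι * g 4 + Fintype.card ι * ((Fintype.card ι : ℝ) - 2) * g 2 := by
  have hdist : ∀ p ∈ nonAntipodalPairs σ, g (‖u p.1 - u p.2‖ ^ 2) = g 2 := by
    intro p hp
    obtain ⟨hne_antipode, hne⟩ := mem_nonAntipodalPairs.mp hp
    rw [norm_sub_sq_eq_two_sub_two_mul_inner (hu p.1) (hu p.2),
      horth p.1 p.2 hne hne_antipode, mul_zero, sub_zero]
  rw [pairEnergy_eq_add_sum_nonAntipodalPairs hu hσ, sum_congr rfl hdist, sum_const,
    nsmul_eq_mul, card_nonAntipodalPairs (ne_self_of_inner_eq_neg_one hσ)]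

theorem crossPolytope_minimizes_energy_general (hconv : ConvexOn ℝ (Set.Icc (0 : ℝ) 4) g)
    (hmono : AntitoneOn g (Set.Icc (0 : ℝ) 4)) (hu : ∀ i, ‖u i‖ = 1)
    (hanti : ∀ i, ∃ j, u j = -u i) :
    Fintype.card ι * g 4 + Fintype.card ι * ((Fintype.card ι : ℝ) - 2) * g 2 ≤
        pairEnergy g u ∧
      ((∀ i, ∃ j, ⟪u i, u j⟫ = -1 ∧ ∀ k, k ≠ i → k ≠ j → ⟪u i, u k⟫ = 0) →
        pairEnergy g u =
          Fintype.card ι * g 4 + Fintype.card ι * ((Fintype.card ι : ℝ) - 2) * g 2) := by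
  constructor
  · choose σ hσ using hanti
    have hinner (i : ι) : ⟪u i, u (σ i)⟫ = -1 :=
      (inner_eq_neg_one_iff_of_norm_eq_one (hu i) (hu (σ i))).mpr (by rw [hσ, neg_neg])
    exact le_pairEnergy_of_inner_eq_neg_one hconv hmono hu hinner
  · intro hcross
    choose τ hτ horth using hcross
    exact pairEnergy_eq_of_inner_eq_zero hu hτ horth

end UnitVectors

/-- For `N = 2d` and a convex nonincreasing kernel `g` on `[0,4]`, the pairwise
energy of an antipodal family of unit vectors is at least `N·g(4) + N·(N−2)·g(2)`,
with equality for the simplex cross-polytope; hence the cross-polytope minimizes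
the energy among antipodal unit-norm configurations. -/
theorem crossPolytope_minimizes_energy (d : ℕ) (hd : 2 ≤ d) (N : ℕ) (hN : N = 2 * d)
    (g : ℝ → ℝ) (hconv : ConvexOn ℝ (Set.Icc (0:ℝ) 4) g)
    (hmono : AntitoneOn g (Set.Icc (0:ℝ) 4))
    (u : Fin N → EuclideanSpace ℝ (Fin d)) (hnorm : ∀ i, ‖u i‖ = 1)
    (hanti : ∀ i, ∃ j, u j = -(u i)) :
    ((N:ℝ) * g 4 + (N:ℝ) * ((N:ℝ) - 2) * g 2
        ≤ ∑ i, ∑ j ∈ Finset.univ.erase i, g (‖u i - u j‖^2)) ∧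
    (IsSimplexCrossPolytope u →
      ∑ i, ∑ j ∈ Finset.univ.erase i, g (‖u i - u j‖^2)
        = (N:ℝ) * g 4 + (N:ℝ) * ((N:ℝ) - 2) * g 2) := by
  obtain ⟨hle, heq⟩ := crossPolytope_minimizes_energy_general hconv hmono hnorm hanti
  rw [Fintype.card_fin] at hle heq
  exact ⟨hle, fun hu => heq fun i => (hu.2 i).imp fun _ hj => ⟨hj.1, hj.2.2⟩⟩
end

section
/- Let N ≥ 2 and let u, v : Fin N → EuclideanSpace ℝ (Fin d) be arbitrary. Define the one-sided contrastive loss ℓ(u,v) = (1/N) Σ_i log( 1 + Σ_{j ≠ i} exp(⟪u i, v j − v i⟫) ). Then ℓ(u,v) ≥ log( 1 + (N−1) · exp( ( ⟪Σ_j v j, Σ_i u i⟫ − N · Σ_i ⟪u i, v i⟫ ) / (N(N−1)) ) ). -/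
open scoped RealInnerProductSpace BigOperators
open Finset

/-- The one-sided contrastive loss `(1/N) Σ_i log(1 + Σ_{j ≠ i} exp ⟪u i, v j − v i⟫)`. -/
noncomputable def oneSidedLoss {N d : ℕ} (u v : Fin N → EuclideanSpace ℝ (Fin d)) : ℝ :=
  (1/(N:ℝ)) * ∑ i, Real.log (1 + ∑ j ∈ Finset.univ.erase i, Real.exp ⟪u i, v j - v i⟫)

/-!
Jensen's inequality is applied twice: to `exp` inside each logarithm, and then, over the index `i`,
to the convex function `x ↦ log (1 + (N - 1) * exp x)`.
-/

section Jensen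

theorem card_mul_map_inv_card_smul_sum_le_sum {𝕜 E ι : Type*} [Field 𝕜] [LinearOrder 𝕜]
    [IsStrictOrderedRing 𝕜] [AddCommGroup E] [Module 𝕜 E] {D : Set E} {f : E → 𝕜}
    (hf : ConvexOn 𝕜 D f) (s : Finset ι) {x : ι → E} (hx : ∀ i ∈ s, x i ∈ D) :
    (#s : 𝕜) * f ((#s : 𝕜)⁻¹ • ∑ i ∈ s, x i) ≤ ∑ i ∈ s, f (x i) := by
  obtain rfl | hs := s.eq_empty_or_nonempty
  · simp
  have card_pos : (0 : 𝕜) < #s := by exact_mod_cast hs.card_pos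
  have jensen := hf.map_sum_le (w := fun _ ↦ (#s : 𝕜)⁻¹) (fun _ _ ↦ by positivity)
    (by simp [card_pos.ne']) hx
  rwa [← smul_sum, ← smul_sum, smul_eq_mul, le_inv_mul_iff₀ card_pos] at jensen

theorem card_mul_exp_mean_le_sum_exp {ι : Type*} (s : Finset ι) (x : ι → ℝ) :
    #s * Real.exp ((∑ i ∈ s, x i) / #s) ≤ ∑ i ∈ s, Real.exp (x i) := by
  simpa only [smul_eq_mul, inv_mul_eq_div] using
    card_mul_map_inv_card_smul_sum_le_sum convexOn_exp s fun i _ ↦ Set.mem_univ (x i)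

end Jensen

section LogOneAddExp

theorem hasDerivAt_log_one_add_mul_exp {c : ℝ} (hc : 0 ≤ c) (x : ℝ) :
    HasDerivAt (fun y ↦ Real.log (1 + c * Real.exp y)) (1 - (1 + c * Real.exp x)⁻¹) x := by
  have denom_ne_zero : 1 + c * Real.exp x ≠ 0 := by positivity
  convert (((Real.hasDerivAt_exp x).const_mul c).const_add 1).log denom_ne_zero using 1
  field_simp
  ring

theorem convexOn_log_one_add_mul_exp {c : ℝ} (hc : 0 ≤ c) :
    ConvexOn ℝ Set.univ fun x ↦ Real.log (1 + c * Real.exp x) := by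
  refine Monotone.convexOn_univ_of_deriv
    (fun x ↦ (hasDerivAt_log_one_add_mul_exp hc x).differentiableAt) fun x y hxy ↦ ?_
  rw [(hasDerivAt_log_one_add_mul_exp hc x).deriv, (hasDerivAt_log_one_add_mul_exp hc y).deriv]
  gcongr

theorem card_mul_log_one_add_mul_exp_mean_le_sum_log {ι κ : Type*} (s : Finset ι)
    (t : ι → Finset κ) {m : ℕ} (ht : ∀ i ∈ s, #(t i) = m) (x : ι → κ → ℝ) :
    #s * Real.log (1 + m * Real.exp ((∑ i ∈ s, ∑ j ∈ t i, x i j) / (#s * m))) ≤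
      ∑ i ∈ s, Real.log (1 + ∑ j ∈ t i, Real.exp (x i j)) := by
  have mean_eq : (∑ i ∈ s, ∑ j ∈ t i, x i j) / (#s * m) =
      (#s : ℝ)⁻¹ • ∑ i ∈ s, (∑ j ∈ t i, x i j) / m := by
    rw [← sum_div, smul_eq_mul, inv_mul_eq_div, div_div, mul_comm]
  calc
    _ ≤ ∑ i ∈ s, Real.log (1 + m * Real.exp ((∑ j ∈ t i, x i j) / m)) := by
      rw [mean_eq]
      exact card_mul_map_inv_card_smul_sum_le_sum (convexOn_log_one_add_mul_exp m.cast_nonneg) s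
        fun _ _ ↦ Set.mem_univ _
    _ ≤ ∑ i ∈ s, Real.log (1 + ∑ j ∈ t i, Real.exp (x i j)) := by
      refine sum_le_sum fun i hi ↦ Real.log_le_log (by positivity) ?_
      gcongr
      exact ht i hi ▸ card_mul_exp_mean_le_sum_exp (t i) (x i)

end LogOneAddExp

section Inner

variable {ι E : Type*} [Fintype ι] [DecidableEq ι] [SeminormedAddCommGroup E]
  [InnerProductSpace ℝ E]

theorem sum_sum_erase_inner_sub (u v : ι → E) :
    ∑ i, ∑ j ∈ univ.erase i, ⟪u i, v j - v i⟫ =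
      ⟪∑ j, v j, ∑ i, u i⟫ - Fintype.card ι * ∑ i, ⟪u i, v i⟫ := by
  have row_sum (i : ι) : ∑ j ∈ univ.erase i, ⟪u i, v j - v i⟫ =
      ⟪u i, ∑ j, v j⟫ - Fintype.card ι * ⟪u i, v i⟫ := by
    rw [sum_erase _ (by rw [sub_self, inner_zero_right])]
    simp only [inner_sub_right, sum_sub_distrib, inner_sum, sum_const, card_univ, nsmul_eq_mul]
  simp only [row_sum, sum_sub_distrib, ← sum_inner, ← mul_sum]
  rw [real_inner_comm]

theorem oneSidedLoss_ge_jensen_bound_general [Nontrivial ι] (u v : ι → E) :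
    Real.log (1 + ((Fintype.card ι : ℝ) - 1) *
        Real.exp ((⟪∑ j, v j, ∑ i, u i⟫ - (Fintype.card ι : ℝ) * ∑ i, ⟪u i, v i⟫) /
          ((Fintype.card ι : ℝ) * ((Fintype.card ι : ℝ) - 1)))) ≤
      (1 / (Fintype.card ι : ℝ)) *
        ∑ i, Real.log (1 + ∑ j ∈ univ.erase i, Real.exp ⟪u i, v j - v i⟫) := by
  have card_pos : (0 : ℝ) < Fintype.card ι := by exact_mod_cast Fintype.card_pos
  have bound := card_mul_log_one_add_mul_exp_mean_le_sum_log univ (fun i : ι ↦ univ.erase i)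
    (fun i _ ↦ card_erase_of_mem (mem_univ i)) fun i j ↦ ⟪u i, v j - v i⟫
  rw [sum_sum_erase_inner_sub, card_univ, Nat.cast_pred Fintype.card_pos] at bound
  rwa [one_div, le_inv_mul_iff₀ card_pos]

end Inner

/-- Jensen lower bound for the one-sided contrastive loss. -/
theorem oneSidedLoss_ge_jensen_bound (N d : ℕ) (hN : 2 ≤ N)
    (u v : Fin N → EuclideanSpace ℝ (Fin d)) :
    Real.log (1 + ((N:ℝ) - 1) *
        Real.exp ((⟪∑ j, v j, ∑ i, u i⟫ - (N:ℝ) * ∑ i, ⟪u i, v i⟫) / ((N:ℝ) * ((N:ℝ) - 1))))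
      ≤ oneSidedLoss u v := by
  have : Nontrivial (Fin N) := Fin.nontrivial_iff_two_le.mpr hN
  simpa only [oneSidedLoss, Fintype.card_fin] using oneSidedLoss_ge_jensen_bound_general u v
end

section
/- Let N ≥ 1 and let u, v : Fin N → EuclideanSpace ℝ (Fin d) satisfy ‖u i‖ = 1 and ‖v i‖ = 1 for all i. Then N · Σ_i ⟪u i, v i⟫ − ⟪Σ_i u i, Σ_i v i⟫ ≤ N². Moreover, if u = v, Σ_i u i = 0 and all u i are unit vectors (as holds when (u i) forms a simplex ETF), then equality holds. -/
open scoped RealInnerProductSpace BigOperators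
open Finset

/-! Polarizing both inner products, the gap between `#s * ∑ (‖uᵢ‖² + ‖vᵢ‖²) / 2` and
`#s * ∑ ⟪uᵢ, vᵢ⟫ - ⟪∑ uᵢ, ∑ vᵢ⟫` is half of
`(#s * ∑ ‖uᵢ - vᵢ‖² - ‖∑ (uᵢ - vᵢ)‖²) + ‖∑ uᵢ‖² + ‖∑ vᵢ‖²`, whose first term is nonnegative by
Cauchy–Schwarz. The gap vanishes only if both sums vanish, and then `∑ ‖uᵢ - vᵢ‖² = 0` as well. -/

section Seminormed

variable {ι E : Type*} [SeminormedAddCommGroup E] (s : Finset ι)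

theorem sq_norm_sum_le_card_mul_sum_sq_norm (w : ι → E) :
    ‖∑ i ∈ s, w i‖ ^ 2 ≤ #s * ∑ i ∈ s, ‖w i‖ ^ 2 :=
  calc ‖∑ i ∈ s, w i‖ ^ 2 ≤ (∑ i ∈ s, ‖w i‖) ^ 2 := by gcongr; exact norm_sum_le s w
    _ ≤ #s * ∑ i ∈ s, ‖w i‖ ^ 2 := sq_sum_le_card_mul_sum_sq

variable {s} {u : ι → E}

theorem sum_sq_norm_le_card (hu : ∀ i ∈ s, ‖u i‖ ≤ 1) : ∑ i ∈ s, ‖u i‖ ^ 2 ≤ #s := by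
  simpa using sum_le_card_nsmul s _ 1 fun i hi => pow_le_one₀ (norm_nonneg (u i)) (hu i hi)

theorem sum_sq_norm_eq_card_iff (hu : ∀ i ∈ s, ‖u i‖ ≤ 1) :
    ∑ i ∈ s, ‖u i‖ ^ 2 = #s ↔ ∀ i ∈ s, ‖u i‖ = 1 := by
  have sq_norm_le_one : ∀ i ∈ s, ‖u i‖ ^ 2 ≤ 1 := fun i hi =>
    pow_le_one₀ (norm_nonneg _) (hu i hi)
  simpa [pow_eq_one_iff_of_nonneg] using
    sum_eq_sum_iff_of_le sq_norm_le_one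

variable [InnerProductSpace ℝ E] (s) (u) (v : ι → E)

theorem two_mul_card_mul_sum_inner_sub_inner_sum :
    2 * (#s * ∑ i ∈ s, ⟪u i, v i⟫ - ⟪∑ i ∈ s, u i, ∑ i ∈ s, v i⟫) =
      #s * (∑ i ∈ s, ‖u i‖ ^ 2 + ∑ i ∈ s, ‖v i‖ ^ 2) -
        ((#s * ∑ i ∈ s, ‖u i - v i‖ ^ 2 - ‖∑ i ∈ s, (u i - v i)‖ ^ 2) +
          ‖∑ i ∈ s, u i‖ ^ 2 + ‖∑ i ∈ s, v i‖ ^ 2) := by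
  simp only [norm_sub_sq_real, sum_sub_distrib, sum_add_distrib, ← mul_sum]
  ring

theorem card_mul_sum_inner_sub_inner_sum_le :
    #s * ∑ i ∈ s, ⟪u i, v i⟫ - ⟪∑ i ∈ s, u i, ∑ i ∈ s, v i⟫ ≤
      #s * (∑ i ∈ s, ‖u i‖ ^ 2 + ∑ i ∈ s, ‖v i‖ ^ 2) / 2 := by
  have polarization := two_mul_card_mul_sum_inner_sub_inner_sum s u v
  have cauchy_schwarz := sq_norm_sum_le_card_mul_sum_sq_norm s fun i => u i - v i
  linarith [sq_nonneg ‖∑ i ∈ s, u i‖, sq_nonneg ‖∑ i ∈ s, v i‖]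

end Seminormed

section Normed

variable {ι E : Type*} [NormedAddCommGroup E] [InnerProductSpace ℝ E] (s : Finset ι) (u v : ι → E)

theorem card_mul_sum_inner_sub_inner_sum_eq_iff :
    #s * ∑ i ∈ s, ⟪u i, v i⟫ - ⟪∑ i ∈ s, u i, ∑ i ∈ s, v i⟫ =
        #s * (∑ i ∈ s, ‖u i‖ ^ 2 + ∑ i ∈ s, ‖v i‖ ^ 2) / 2 ↔
      (∀ i ∈ s, u i = v i) ∧ ∑ i ∈ s, u i = 0 := by
  have polarization := two_mul_card_mul_sum_inner_sub_inner_sum s u v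
  constructor
  · intro equality
    have cauchy_schwarz := sq_norm_sum_le_card_mul_sum_sq_norm s fun i => u i - v i
    have sum_u : ∑ i ∈ s, u i = 0 := by
      rw [← norm_eq_zero, ← sq_eq_zero_iff]
      linarith [sq_nonneg ‖∑ i ∈ s, u i‖, sq_nonneg ‖∑ i ∈ s, v i‖]
    have sum_v : ∑ i ∈ s, v i = 0 := by
      rw [← norm_eq_zero, ← sq_eq_zero_iff]
      linarith [sq_nonneg ‖∑ i ∈ s, u i‖, sq_nonneg ‖∑ i ∈ s, v i‖]
    have card_mul_sum_sq : #s * ∑ i ∈ s, ‖u i - v i‖ ^ 2 = 0 := by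
      simp only [sum_sub_distrib, sum_u, sum_v, sub_zero, norm_zero] at polarization equality
      linarith
    refine ⟨fun i hi => ?_, sum_u⟩
    have hcard : (#s : ℝ) ≠ 0 := Nat.cast_ne_zero.2 (card_ne_zero_of_mem hi)
    have sum_sq : ∑ i ∈ s, ‖u i - v i‖ ^ 2 = 0 :=
      (mul_eq_zero.1 card_mul_sum_sq).resolve_left hcard
    have sq_norm_sub := (sum_eq_zero_iff_of_nonneg fun _ _ => sq_nonneg _).1 sum_sq i hi
    simpa [sub_eq_zero] using sq_norm_sub
  · rintro ⟨u_eq_v, sum_u⟩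
    have sum_v : ∑ i ∈ s, v i = 0 := sum_congr rfl u_eq_v ▸ sum_u
    have sum_sq : ∑ i ∈ s, ‖u i - v i‖ ^ 2 = 0 :=
      sum_eq_zero fun i hi => by simp [u_eq_v i hi]
    simp only [sum_sub_distrib, sum_sq, sum_u, sum_v, sub_zero, norm_zero] at polarization ⊢
    linarith

variable {s u v}

theorem inner_sum_bound_general (hu : ∀ i ∈ s, ‖u i‖ ≤ 1) (hv : ∀ i ∈ s, ‖v i‖ ≤ 1) :
    #s * ∑ i ∈ s, ⟪u i, v i⟫ - ⟪∑ i ∈ s, u i, ∑ i ∈ s, v i⟫ ≤ (#s : ℝ) ^ 2 ∧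
    (#s * ∑ i ∈ s, ⟪u i, v i⟫ - ⟪∑ i ∈ s, u i, ∑ i ∈ s, v i⟫ = (#s : ℝ) ^ 2 ↔
      (∀ i ∈ s, u i = v i) ∧ ∑ i ∈ s, u i = 0 ∧ ∀ i ∈ s, ‖u i‖ = 1) := by
  have bound := card_mul_sum_inner_sub_inner_sum_le s u v
  have card_mul_u : #s * ∑ i ∈ s, ‖u i‖ ^ 2 ≤ (#s : ℝ) * #s := by
    gcongr; exact sum_sq_norm_le_card hu
  have card_mul_v : #s * ∑ i ∈ s, ‖v i‖ ^ 2 ≤ (#s : ℝ) * #s := by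
    gcongr; exact sum_sq_norm_le_card hv
  refine ⟨by linarith, fun equality => ?_, fun ⟨u_eq_v, sum_u, norm_u⟩ => ?_⟩
  · obtain ⟨u_eq_v, sum_u⟩ :=
      (card_mul_sum_inner_sub_inner_sum_eq_iff s u v).1 (by linarith)
    refine ⟨u_eq_v, sum_u, fun i hi => ?_⟩
    have hcard : (#s : ℝ) ≠ 0 := Nat.cast_ne_zero.2 (card_ne_zero_of_mem hi)
    have sum_sq : ∑ i ∈ s, ‖u i‖ ^ 2 = #s := mul_left_cancel₀ hcard (by linarith)
    exact (sum_sq_norm_eq_card_iff hu).1 sum_sq i hi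
  · have norm_v : ∀ i ∈ s, ‖v i‖ = 1 := fun i hi => u_eq_v i hi ▸ norm_u i hi
    rw [(card_mul_sum_inner_sub_inner_sum_eq_iff s u v).2 ⟨u_eq_v, sum_u⟩,
      (sum_sq_norm_eq_card_iff hu).2 norm_u, (sum_sq_norm_eq_card_iff hv).2 norm_v]
    ring

end Normed

/-- For unit-norm families, `N·Σᵢ⟪uᵢ,vᵢ⟫ − ⟪Σᵢuᵢ, Σᵢvᵢ⟫ ≤ N²`, with equality when
`u = v` and `Σᵢ uᵢ = 0` (as holds for a simplex ETF). -/
theorem inner_sum_bound (N d : ℕ) (hN : 1 ≤ N)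
    (u v : Fin N → EuclideanSpace ℝ (Fin d))
    (hu : ∀ i, ‖u i‖ = 1) (hv : ∀ i, ‖v i‖ = 1) :
    ((N:ℝ) * ∑ i, ⟪u i, v i⟫ - ⟪∑ i, u i, ∑ i, v i⟫ ≤ (N:ℝ)^2) ∧
    (u = v → (∑ i, u i) = 0 →
      (N:ℝ) * ∑ i, ⟪u i, v i⟫ - ⟪∑ i, u i, ∑ i, v i⟫ = (N:ℝ)^2) := by
  obtain ⟨bound, eq_iff⟩ := card_fin N ▸
    inner_sum_bound_general (s := univ) (fun i _ => (hu i).le) fun i _ => (hv i).le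
  exact ⟨bound, fun huv h0 => eq_iff.2 ⟨fun i _ => congrFun huv i, h0, fun i _ => hu i⟩⟩
end

section
/- Let S ⊆ Fin N with |S| = B ≥ 2, and let u, v : Fin N → EuclideanSpace ℝ (Fin d) be arbitrary. Then L_S(u,v) ≥ (1/(B(B−1))) · Σ_{i ∈ S} Σ_{j ∈ S, j ≠ i} [ log( 1 + (B−1)·exp(⟪u i, v j − v i⟫) ) + log( 1 + (B−1)·exp(⟪v i, u j − u i⟫) ) ]. -/
open scoped RealInnerProductSpace BigOperators
open Finset

/-!
After factoring `exp (s i i)` out of the denominator, row `i` of the loss is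
`log (1 + ∑ j ∈ S.erase i, exp (s i j - s i i))`, where `s` is the matrix of scores. With `B = #S`,
the argument of this logarithm is the mean over `j ∈ S.erase i` of the `B - 1` numbers
`1 + (B - 1) * exp (s i j - s i i)`, so Jensen's inequality for the concave logarithm bounds each
row from below, and averaging over `i` gives the bound.
-/

section

variable {ι : Type*}

theorem sum_log_div_card_le_log_sum_div_card {T : Finset ι} (hT : T.Nonempty) {x : ι → ℝ}
    (hx : ∀ j ∈ T, 0 < x j) :
    (∑ j ∈ T, Real.log (x j)) / #T ≤ Real.log ((∑ j ∈ T, x j) / #T) := by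
  have hcard : (#T : ℝ) ≠ 0 := mod_cast hT.card_ne_zero
  have jensen := strictConcaveOn_log_Ioi.concaveOn.le_map_sum (t := T) (w := fun _ ↦ (#T : ℝ)⁻¹)
    (fun _ _ ↦ by positivity) (by simp [hcard]) hx
  simpa only [smul_eq_mul, inv_mul_eq_div, ← sum_div] using jensen

theorem sum_log_one_add_card_mul_div_card_le {T : Finset ι} (hT : T.Nonempty) {y : ι → ℝ}
    (hy : ∀ j ∈ T, 0 ≤ y j) :
    (∑ j ∈ T, Real.log (1 + #T * y j)) / #T ≤ Real.log (1 + ∑ j ∈ T, y j) := by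
  have hcard : (#T : ℝ) ≠ 0 := mod_cast hT.card_ne_zero
  have mean_eq : (∑ j ∈ T, (1 + #T * y j)) / #T = 1 + ∑ j ∈ T, y j := by
    rw [sum_add_distrib, ← mul_sum, sum_const, nsmul_one, add_div, div_self hcard,
      mul_div_cancel_left₀ _ hcard]
  rw [← mean_eq]
  refine sum_log_div_card_le_log_sum_div_card hT fun j hj ↦ ?_
  have := hy j hj
  positivity

/-- The mean cross-entropy over `i ∈ S` of the softmax of the scores `s i j`, `j ∈ S`, against the
target `j = i`. One half of the contrastive loss is the case `s i j = ⟪u i, v j⟫`. -/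
noncomputable def softmaxCrossEntropy (S : Finset ι) (s : ι → ι → ℝ) : ℝ :=
  -(1 / (#S : ℝ)) * ∑ i ∈ S, Real.log (Real.exp (s i i) / ∑ j ∈ S, Real.exp (s i j))

theorem batchLoss_eq_softmaxCrossEntropy_add {N d : ℕ} (S : Finset (Fin N))
    (u v : Fin N → EuclideanSpace ℝ (Fin d)) :
    batchLoss S u v =
      softmaxCrossEntropy S (fun i j ↦ ⟪u i, v j⟫) +
        softmaxCrossEntropy S (fun i j ↦ ⟪v i, u j⟫) := by
  simp only [batchLoss, softmaxCrossEntropy, sub_eq_add_neg, neg_mul]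

variable [DecidableEq ι]

theorem neg_log_softmax_eq_log_one_add_sum_erase {S : Finset ι} {i : ι} (hi : i ∈ S) (a : ι → ℝ) :
    -Real.log (Real.exp (a i) / ∑ j ∈ S, Real.exp (a j)) =
      Real.log (1 + ∑ j ∈ S.erase i, Real.exp (a j - a i)) := by
  simp only [← Real.log_inv, inv_div, ← add_sum_erase S _ hi, add_div, sum_div, Real.exp_sub,
    div_self (Real.exp_ne_zero (a i))]

theorem sum_erase_log_div_le_neg_log_softmax {S : Finset ι} (hS : S.Nontrivial) {i : ι} (hi : i ∈ S)
    (a : ι → ℝ) :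
    (∑ j ∈ S.erase i, Real.log (1 + ((#S : ℝ) - 1) * Real.exp (a j - a i))) / ((#S : ℝ) - 1) ≤
      -Real.log (Real.exp (a i) / ∑ j ∈ S, Real.exp (a j)) := by
  have card_erase : (#(S.erase i) : ℝ) = #S - 1 := cast_card_erase_of_mem hi
  rw [neg_log_softmax_eq_log_one_add_sum_erase hi, ← card_erase]
  exact sum_log_one_add_card_mul_div_card_le hS.erase_nonempty fun _ _ ↦ (Real.exp_pos _).le

theorem pairwise_bound_le_softmaxCrossEntropy {S : Finset ι} (hS : S.Nontrivial)
    (s : ι → ι → ℝ) :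
    (1 / ((#S : ℝ) * ((#S : ℝ) - 1))) * ∑ i ∈ S, ∑ j ∈ S.erase i,
        Real.log (1 + ((#S : ℝ) - 1) * Real.exp (s i j - s i i))
      ≤ softmaxCrossEntropy S s := by
  calc
    _ = (1 / (#S : ℝ)) * ∑ i ∈ S,
        (∑ j ∈ S.erase i, Real.log (1 + ((#S : ℝ) - 1) * Real.exp (s i j - s i i))) /
          ((#S : ℝ) - 1) := by
      rw [← sum_div, one_div_mul_eq_div, one_div_mul_eq_div, div_mul_eq_div_div_swap]
    _ ≤ (1 / (#S : ℝ)) * ∑ i ∈ S,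
        -Real.log (Real.exp (s i i) / ∑ j ∈ S, Real.exp (s i j)) := by
      gcongr with i hi
      exact sum_erase_log_div_le_neg_log_softmax hS hi (s i)
    _ = softmaxCrossEntropy S s := by
      rw [softmaxCrossEntropy, sum_neg_distrib, mul_neg, neg_mul]

theorem batchLoss_ge_pairwise_bound_general {E : Type*} [SeminormedAddCommGroup E]
    [InnerProductSpace ℝ E] {S : Finset ι} (hS : S.Nontrivial) (u v : ι → E) :
    (1 / ((#S : ℝ) * ((#S : ℝ) - 1))) * ∑ i ∈ S, ∑ j ∈ S.erase i,
        (Real.log (1 + ((#S : ℝ) - 1) * Real.exp ⟪u i, v j - v i⟫)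
          + Real.log (1 + ((#S : ℝ) - 1) * Real.exp ⟪v i, u j - u i⟫))
      ≤ softmaxCrossEntropy S (fun i j ↦ ⟪u i, v j⟫) +
        softmaxCrossEntropy S (fun i j ↦ ⟪v i, u j⟫) := by
  simp only [sum_add_distrib, mul_add, inner_sub_right]
  exact add_le_add (pairwise_bound_le_softmaxCrossEntropy hS _)
    (pairwise_bound_le_softmaxCrossEntropy hS _)

end

/-- Jensen lower bound for the mini-batch contrastive loss of a batch of size `B ≥ 2`. -/
theorem batchLoss_ge_pairwise_bound (N d B : ℕ) (hB : 2 ≤ B)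
    (S : Finset (Fin N)) (hS : S.card = B)
    (u v : Fin N → EuclideanSpace ℝ (Fin d)) :
    (1/((B:ℝ) * ((B:ℝ) - 1))) * ∑ i ∈ S, ∑ j ∈ S.erase i,
        (Real.log (1 + ((B:ℝ) - 1) * Real.exp ⟪u i, v j - v i⟫)
          + Real.log (1 + ((B:ℝ) - 1) * Real.exp ⟪v i, u j - u i⟫))
      ≤ batchLoss S u v := by
  rw [← hS, batchLoss_eq_softmaxCrossEntropy_add]
  exact batchLoss_ge_pairwise_bound_general (one_lt_card_iff_nontrivial.mp (hS ▸ hB)) u v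
end

section
/- Let B ≥ 1 and define the softmax map p : EuclideanSpace ℝ (Fin B) → EuclideanSpace ℝ (Fin B) by p(x)_i = exp(x_i) / Σ_k exp(x_k). Then for all x, y with every coordinate in [−1, 1], one has ‖p(x) − p(y)‖ ≤ (e²/B) · ‖x − y‖, where ‖·‖ is the Euclidean norm and e = exp(1). -/
open scoped BigOperators
open Finset

/-- The softmax map on `ℝ^B`. -/
noncomputable def softmax {B : ℕ} (x : EuclideanSpace ℝ (Fin B)) : EuclideanSpace ℝ (Fin B) :=
  WithLp.toLp 2 fun i => Real.exp (x i) / ∑ k, Real.exp (x k)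

/-!
With `p = softmax z`, the derivative of softmax at `z` is `diag p - p pᵀ`, the covariance matrix of
the categorical distribution `p`. It maps `d` to the vector with entries `p i * (d i - m)`, where
`m` is the mean of `d` under `p`. If every `p i ≤ M`, its squared length is at most `M` times the
variance of `d`, hence at most `M` times the second moment of `d`, hence at most `M² ‖d‖²`. When the
coordinates of `z` differ by at most `c`, one can take `M = exp c / B`; such `z` form a convex set,
so the mean value inequality applies.
-/

section CategoricalCovariance

variable {ι : Type*} [Fintype ι] {p : ι → ℝ}

lemma sum_mul_sub_mean_sq_le (hp : ∑ i, p i = 1) (d : ι → ℝ) :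
    ∑ i, p i * (d i - ∑ k, p k * d k) ^ 2 ≤ ∑ i, p i * d i ^ 2 := by
  set m := ∑ k, p k * d k with hm
  have variance_eq : ∑ i, p i * (d i - m) ^ 2 = ∑ i, p i * d i ^ 2 - m ^ 2 := by
    calc ∑ i, p i * (d i - m) ^ 2
        = ∑ i, (p i * d i ^ 2 - 2 * m * (p i * d i) + m ^ 2 * p i) :=
          sum_congr rfl fun i _ => by ring
      _ = ∑ i, p i * d i ^ 2 - 2 * m * m + m ^ 2 * 1 := by
          rw [sum_add_distrib, sum_sub_distrib, ← mul_sum, ← mul_sum, hp, ← hm]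
      _ = ∑ i, p i * d i ^ 2 - m ^ 2 := by ring
  linarith [sq_nonneg m]

variable [DecidableEq ι]

/-- The covariance matrix `diag p - p pᵀ` of the one-hot encoding of a random index distributed
according to the weights `p`. At `p = softmax x` it is the Jacobian of softmax at `x`. -/
def categoricalCovariance (p : ι → ℝ) : Matrix ι ι ℝ :=
  Matrix.diagonal p - Matrix.vecMulVec p p

lemma toEuclideanCLM_categoricalCovariance_apply (p : ι → ℝ) (d : EuclideanSpace ℝ ι) (i : ι) :
    Matrix.toEuclideanCLM (𝕜 := ℝ) (categoricalCovariance p) d i =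
      p i * (d i - ∑ k, p k * d k) := by
  simp [categoricalCovariance, Matrix.ofLp_toEuclideanCLM, Matrix.mulVec_diagonal,
    Matrix.vecMulVec_mulVec, dotProduct, mul_sub, mul_comm]

lemma norm_toEuclideanCLM_categoricalCovariance_le (hp : p ∈ stdSimplex ℝ ι)
    {M : ℝ} (hM : ∀ i, p i ≤ M) :
    ‖Matrix.toEuclideanCLM (𝕜 := ℝ) (categoricalCovariance p)‖ ≤ M := by
  obtain ⟨hp_nonneg, hp_sum⟩ := hp
  have hM_nonneg : 0 ≤ M := by
    obtain ⟨i, -, -⟩ := exists_ne_zero_of_sum_ne_zero (hp_sum.trans_ne one_ne_zero)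
    exact (hp_nonneg i).trans (hM i)
  refine ContinuousLinearMap.opNorm_le_bound _ hM_nonneg fun d => ?_
  refine le_of_sq_le_sq ?_ (by positivity)
  set m := ∑ k, p k * d k
  calc ‖Matrix.toEuclideanCLM (𝕜 := ℝ) (categoricalCovariance p) d‖ ^ 2
      = ∑ i, p i * (p i * (d i - m) ^ 2) := by
        simp only [EuclideanSpace.real_norm_sq_eq, toEuclideanCLM_categoricalCovariance_apply]
        exact sum_congr rfl fun i _ => by ring
    _ ≤ ∑ i, M * (p i * (d i - m) ^ 2) := by
        gcongr with i
        · exact mul_nonneg (hp_nonneg i) (sq_nonneg _)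
        · exact hM i
    _ = M * ∑ i, p i * (d i - m) ^ 2 := (mul_sum ..).symm
    _ ≤ M * ∑ i, p i * d i ^ 2 :=
        mul_le_mul_of_nonneg_left (sum_mul_sub_mean_sq_le hp_sum d) hM_nonneg
    _ ≤ M * ∑ i, M * d i ^ 2 := by gcongr with i; exact hM i
    _ = (M * ‖d‖) ^ 2 := by rw [← mul_sum, mul_pow, EuclideanSpace.real_norm_sq_eq]; ring

end CategoricalCovariance

lemma sum_exp_pos {ι : Type*} [Fintype ι] [Nonempty ι] (x : ι → ℝ) : 0 < ∑ k, Real.exp (x k) :=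
  sum_pos (fun _ _ => Real.exp_pos _) univ_nonempty

lemma convex_setOf_sub_le {ι : Type*} (c : ℝ) :
    Convex ℝ {x : EuclideanSpace ℝ ι | ∀ i k, x i - x k ≤ c} := by
  simp only [Set.ofPred_forall]
  refine convex_iInter fun i => convex_iInter fun k => ?_
  have h_linear : IsLinearMap ℝ fun x : EuclideanSpace ℝ ι => x i - x k :=
    (EuclideanSpace.projₗ i - EuclideanSpace.projₗ k : EuclideanSpace ℝ ι →ₗ[ℝ] ℝ).isLinear
  exact convex_halfSpace_le h_linear c

section Softmax

variable {B : ℕ}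

lemma softmax_apply (x : EuclideanSpace ℝ (Fin B)) (i : Fin B) :
    softmax x i = Real.exp (x i) / ∑ k, Real.exp (x k) :=
  rfl

lemma softmax_mem_stdSimplex [NeZero B] (x : EuclideanSpace ℝ (Fin B)) :
    ⇑(softmax x) ∈ stdSimplex ℝ (Fin B) := by
  refine ⟨fun i => div_nonneg (Real.exp_nonneg _) (sum_exp_pos x).le, ?_⟩
  simp only [softmax_apply]
  rw [← sum_div, div_self (sum_exp_pos x).ne']

lemma softmax_apply_le_exp_div {x : EuclideanSpace ℝ (Fin B)} {c : ℝ} {i : Fin B}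
    (hx : ∀ k, x i - x k ≤ c) : softmax x i ≤ Real.exp c / B := by
  have : NeZero B := i.neZero
  have hB : (0 : ℝ) < B := by exact_mod_cast NeZero.pos B
  rw [softmax_apply, div_le_div_iff₀ (sum_exp_pos x) hB]
  calc Real.exp (x i) * B = ∑ _k : Fin B, Real.exp (x i) := by simp [mul_comm]
    _ ≤ ∑ k, Real.exp c * Real.exp (x k) := by
        gcongr with k
        rw [← Real.exp_add, Real.exp_le_exp]
        linarith [hx k]
    _ = Real.exp c * ∑ k, Real.exp (x k) := (mul_sum ..).symm

lemma softmax_apply_eq_exp_sub_log [NeZero B] (x : EuclideanSpace ℝ (Fin B)) (i : Fin B) :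
    softmax x i = Real.exp (x i - Real.log (∑ k, Real.exp (x k))) := by
  rw [softmax_apply, Real.exp_sub, Real.exp_log (sum_exp_pos x)]

lemma hasFDerivAt_log_sum_exp [NeZero B] (x : EuclideanSpace ℝ (Fin B)) :
    HasFDerivAt (fun z : EuclideanSpace ℝ (Fin B) => Real.log (∑ k, Real.exp (z k)))
      (∑ k, softmax x k • (EuclideanSpace.proj k : EuclideanSpace ℝ (Fin B) →L[ℝ] ℝ)) x := by
  have h_sum := HasFDerivAt.fun_sum fun k (_ : k ∈ univ) =>
    (PiLp.hasFDerivAt_apply (𝕜 := ℝ) 2 x k).exp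
  refine (h_sum.log (sum_exp_pos x).ne').congr_fderiv ?_
  simp only [smul_sum, smul_smul, softmax_apply, div_eq_inv_mul]

lemma hasFDerivAt_softmax (x : EuclideanSpace ℝ (Fin B)) :
    HasFDerivAt softmax (Matrix.toEuclideanCLM (𝕜 := ℝ) (categoricalCovariance (softmax x))) x := by
  rw [← hasFDerivWithinAt_univ, hasFDerivWithinAt_euclidean]
  intro i
  have : NeZero B := i.neZero
  simp only [hasFDerivWithinAt_univ, softmax_apply_eq_exp_sub_log]
  refine ((PiLp.hasFDerivAt_apply 2 x i).fun_sub (hasFDerivAt_log_sum_exp x)).exp.congr_fderiv ?_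
  ext d
  simp [toEuclideanCLM_categoricalCovariance_apply, softmax_apply_eq_exp_sub_log]

end Softmax

theorem softmax_lipschitz_on_cube_general {B : ℕ} [NeZero B] {c : ℝ}
    {x y : EuclideanSpace ℝ (Fin B)}
    (hx : ∀ i k, x i - x k ≤ c) (hy : ∀ i k, y i - y k ≤ c) :
    ‖softmax x - softmax y‖ ≤ Real.exp c / B * ‖x - y‖ := by
  refine (convex_setOf_sub_le c).norm_image_sub_le_of_norm_hasFDerivWithin_le
    (fun z _ => (hasFDerivAt_softmax z).hasFDerivWithinAt) (fun z hz => ?_) hy hx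
  exact norm_toEuclideanCLM_categoricalCovariance_le (softmax_mem_stdSimplex z)
    fun i => softmax_apply_le_exp_div (hz i)

/-- The softmax map is `(e²/B)`-Lipschitz on the cube `[−1,1]^B` with respect to
the Euclidean norm. -/
theorem softmax_lipschitz_on_cube (B : ℕ) (hB : 1 ≤ B)
    (x y : EuclideanSpace ℝ (Fin B))
    (hx : ∀ i, |x i| ≤ 1) (hy : ∀ i, |y i| ≤ 1) :
    ‖softmax x - softmax y‖ ≤ (Real.exp 1)^2 / (B:ℝ) * ‖x - y‖ := by
  have : NeZero B := ⟨by omega⟩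
  have sub_le_two {z : EuclideanSpace ℝ (Fin B)} (hz : ∀ i, |z i| ≤ 1) (i k : Fin B) :
      z i - z k ≤ 2 := by
    linarith [(abs_le.1 (hz i)).2, (abs_le.1 (hz k)).1]
  rw [← Real.exp_nat_mul]
  simpa using softmax_lipschitz_on_cube_general (sub_le_two hx) (sub_le_two hy)
end

section
/- Let B ≥ 1 and let X be a B×B real matrix with |X_{ij}| ≤ 1 for all i, j. Define (P_X)_{ij} = exp(X_{ij}) / Σ_k exp(X_{ik}) and (Q_X)_{ij} = exp(X_{ij}) / Σ_k exp(X_{kj}). Then the matrix G(X) := (1/B)·( −2·I_B + P_X + Q_X ), which is the gradient of L^M at X, satisfies ‖G(X)‖_F ≤ 2·√(2/B), where ‖·‖_F is the Frobenius norm. -/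
open scoped BigOperators
open Finset Matrix

/-- Row-softmax matrix `(P_X)_{ij} = exp(X_{ij}) / Σ_k exp(X_{ik})`. -/
noncomputable def Pmat {B : ℕ} (X : Matrix (Fin B) (Fin B) ℝ) : Matrix (Fin B) (Fin B) ℝ :=
  Matrix.of fun i j => Real.exp (X i j) / ∑ k, Real.exp (X i k)

/-- Column-softmax matrix `(Q_X)_{ij} = exp(X_{ij}) / Σ_k exp(X_{kj})`. -/
noncomputable def Qmat {B : ℕ} (X : Matrix (Fin B) (Fin B) ℝ) : Matrix (Fin B) (Fin B) ℝ :=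
  Matrix.of fun i j => Real.exp (X i j) / ∑ k, Real.exp (X k j)

/-- The gradient of `L^M` at `X`: `(1/B)·(−2·I + P_X + Q_X)`. -/
noncomputable def gradLM {B : ℕ} (X : Matrix (Fin B) (Fin B) ℝ) : Matrix (Fin B) (Fin B) ℝ :=
  (1/(B:ℝ)) • ((-2 : ℝ) • (1 : Matrix (Fin B) (Fin B) ℝ) + Pmat X + Qmat X)

/-- The Frobenius norm of a matrix. -/
noncomputable def frobNorm {m n : ℕ} (M : Matrix (Fin m) (Fin n) ℝ) : ℝ :=
  Real.sqrt (∑ i, ∑ j, (M i j)^2)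

/-!
The bound comes from writing `−2·I + P_X + Q_X = (P_X − I) + (Q_X − I)`. Each row of `P_X` and of
`I` is a probability vector, and two probability vectors `p`, `q` satisfy `‖p − q‖² ≤ 2`, because
`(p_j − q_j)² ≤ p_j + q_j` for entries in `[0, 1]`. Summing over the `B` rows gives
`‖P_X − I‖_F ≤ √(2B)`. Transposition turns `Q_X` into `P_{Xᵀ}`, so the triangle inequality yields
`‖G(X)‖_F ≤ 2√(2B)/B`.
-/

theorem sq_sub_le_add_of_mem_Icc {R : Type*} [CommRing R] [LinearOrder R] [IsStrictOrderedRing R]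
    {a b : R} (ha : a ∈ Set.Icc 0 1) (hb : b ∈ Set.Icc 0 1) : (a - b) ^ 2 ≤ a + b := by
  have ha_sq : a ^ 2 ≤ a := pow_le_of_le_one ha.1 ha.2 two_ne_zero
  have hb_sq : b ^ 2 ≤ b := pow_le_of_le_one hb.1 hb.2 two_ne_zero
  have hab : 0 ≤ a * b := mul_nonneg ha.1 hb.1
  linarith [sub_sq a b]

theorem sum_sq_sub_le_two_of_mem_stdSimplex {R ι : Type*} [CommRing R] [LinearOrder R]
    [IsStrictOrderedRing R] [Fintype ι] {p q : ι → R} (hp : p ∈ stdSimplex R ι)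
    (hq : q ∈ stdSimplex R ι) : ∑ j, (p j - q j) ^ 2 ≤ 2 :=
  calc ∑ j, (p j - q j) ^ 2
    _ ≤ ∑ j, (p j + q j) := sum_le_sum fun j _ =>
        sq_sub_le_add_of_mem_Icc (mem_Icc_of_mem_stdSimplex hp j) (mem_Icc_of_mem_stdSimplex hq j)
    _ = 2 := by rw [sum_add_distrib, hp.2, hq.2, one_add_one_eq_two]

theorem softmax_mem_stdSimplex_s15 {ι : Type*} [Fintype ι] [Nonempty ι] (x : ι → ℝ) :
    (fun j => Real.exp (x j) / ∑ k, Real.exp (x k)) ∈ stdSimplex ℝ ι := by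
  have sum_exp_pos : 0 < ∑ k, Real.exp (x k) :=
    sum_pos (fun k _ => Real.exp_pos (x k)) univ_nonempty
  refine ⟨fun j => by positivity, ?_⟩
  rw [← sum_div, div_self sum_exp_pos.ne']

theorem Pmat_row_mem_stdSimplex {B : ℕ} (X : Matrix (Fin B) (Fin B) ℝ) (i : Fin B) :
    Pmat X i ∈ stdSimplex ℝ (Fin B) :=
  have : Nonempty (Fin B) := ⟨i⟩
  softmax_mem_stdSimplex_s15 (X i)

theorem one_row_mem_stdSimplex {R n : Type*} [Semiring R] [PartialOrder R] [ZeroLEOneClass R]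
    [Fintype n] [DecidableEq n] (i : n) : (1 : Matrix n n R) i ∈ stdSimplex R n := by
  convert single_mem_stdSimplex R i using 1
  exact funext fun j => one_eq_pi_single

theorem Qmat_eq_transpose_Pmat_transpose {B : ℕ} (X : Matrix (Fin B) (Fin B) ℝ) :
    Qmat X = (Pmat Xᵀ)ᵀ :=
  rfl

theorem gradLM_eq_smul_sub_one_add_sub_one {B : ℕ} (X : Matrix (Fin B) (Fin B) ℝ) :
    gradLM X = (1 / (B : ℝ)) • ((Pmat X - 1) + (Qmat X - 1)) := by
  rw [gradLM]
  congr 1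
  module

section Frobenius

open scoped Matrix.Norms.Frobenius

theorem frobenius_norm_eq_sqrt_sum_sq {m n : Type*} [Fintype m] [Fintype n] (M : Matrix m n ℝ) :
    ‖M‖ = √(∑ i, ∑ j, M i j ^ 2) := by
  simp only [frobenius_norm_def, Real.sqrt_eq_rpow, Real.rpow_two, Real.norm_eq_abs, sq_abs]

theorem frobenius_norm_sub_le_of_rows_mem_stdSimplex {m n : Type*} [Fintype m] [Fintype n]
    {M N : Matrix m n ℝ} (hM : ∀ i, M i ∈ stdSimplex ℝ n) (hN : ∀ i, N i ∈ stdSimplex ℝ n) :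
    ‖M - N‖ ≤ √(2 * Fintype.card m) := by
  rw [frobenius_norm_eq_sqrt_sum_sq]
  refine Real.sqrt_le_sqrt ?_
  calc ∑ i, ∑ j, (M - N) i j ^ 2
    _ ≤ ∑ _i : m, (2 : ℝ) :=
        sum_le_sum fun i _ => sum_sq_sub_le_two_of_mem_stdSimplex (hM i) (hN i)
    _ = 2 * Fintype.card m := by rw [sum_const, card_univ, nsmul_eq_mul, mul_comm]

theorem frobenius_norm_Pmat_sub_one_le {B : ℕ} (X : Matrix (Fin B) (Fin B) ℝ) :
    ‖Pmat X - 1‖ ≤ √(2 * B) := by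
  simpa only [Fintype.card_fin] using
    frobenius_norm_sub_le_of_rows_mem_stdSimplex (Pmat_row_mem_stdSimplex X) one_row_mem_stdSimplex

theorem frobenius_norm_Qmat_sub_one_le {B : ℕ} (X : Matrix (Fin B) (Fin B) ℝ) :
    ‖Qmat X - 1‖ ≤ √(2 * B) := by
  rw [← frobenius_norm_transpose, transpose_sub, transpose_one, Qmat_eq_transpose_Pmat_transpose,
    transpose_transpose]
  exact frobenius_norm_Pmat_sub_one_le Xᵀ

theorem gradLM_frobNorm_le_general (B : ℕ) (hB : 1 ≤ B) (X : Matrix (Fin B) (Fin B) ℝ) :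
    frobNorm (gradLM X) ≤ 2 * √(2 / (B : ℝ)) := by
  have B_pos : (0 : ℝ) < B := by exact_mod_cast hB
  have sqrt_two_mul : √(2 * B : ℝ) = √(2 / B) * B := by
    rw [show (2 * B : ℝ) = 2 / B * B ^ 2 by field_simp, Real.sqrt_mul (by positivity),
      Real.sqrt_sq B_pos.le]
  calc frobNorm (gradLM X)
    _ = ‖gradLM X‖ := (frobenius_norm_eq_sqrt_sum_sq _).symm
    _ = 1 / B * ‖(Pmat X - 1) + (Qmat X - 1)‖ := by
        rw [gradLM_eq_smul_sub_one_add_sub_one, norm_smul, Real.norm_of_nonneg (by positivity)]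
    _ ≤ 1 / B * (√(2 * B) + √(2 * B)) := by
        gcongr
        exact norm_add_le_of_le (frobenius_norm_Pmat_sub_one_le X)
          (frobenius_norm_Qmat_sub_one_le X)
    _ = 2 * √(2 / B) := by
        rw [sqrt_two_mul]
        field_simp
        norm_num

end Frobenius

/-- The gradient of `L^M` is bounded by `2√(2/B)` in Frobenius norm on the cube of
matrices with entries in `[−1,1]`. -/
theorem gradLM_frobNorm_le (B : ℕ) (hB : 1 ≤ B) (X : Matrix (Fin B) (Fin B) ℝ)
    (hX : ∀ i j, |X i j| ≤ 1) :
    frobNorm (gradLM X) ≤ 2 * Real.sqrt (2 / (B:ℝ)) :=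
  gradLM_frobNorm_le_general B hB X
end
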